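/- There exists an absolute constant C > 0 such that the following holds. Let p be an odd prime, let g, h : 𝔽_p* → 𝔽_p* be arbitrary functions, define f(x,y) = g(x)(h(x)+y) on 𝔽_p* × 𝔽_p*, and set m = μ(g). Then for all nonempty finite subsets A, B, C ⊆ 𝔽_p* with |A|, |B|, |C| ≤ p^{5/8}, one has max{|f(A,B)|, |B+C|} ≥ C · min{ |A|^{1/5}|B|^{4/5}|C|^{1/5} / m^{4/5} , |B||C|^{1/2} / m , |B||A|^{1/2} / m , |B|^{2/3}|C|^{1/3}|A|^{1/3} / m^{2/3} }. -/

import Mathlib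

open Finset Pointwise

/-- `mu g` is `max_{t ∈ 𝔽_p*} |{x ∈ 𝔽_p* : g x = t}|`. -/
def mu {p : ℕ} [NeZero p] (g : ZMod p → ZMod p) : ℕ :=
  Finset.sup (Finset.univ.filter fun t : ZMod p => t ≠ 0)
    (fun t => (Finset.univ.filter fun x : ZMod p => x ≠ 0 ∧ g x = t).card)

namespace PM
open MvPolynomial

section basics
variable {K : Type*} [Field K]

/-- restriction of a polynomial in three variables to the line attached to `q = (x, m, b)`. -/
noncomputable def res (q : K × K × K) : MvPolynomial (Fin 3) K →ₐ[K] Polynomial K :=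
  aeval ![Polynomial.X, Polynomial.C q.2.1 - Polynomial.C q.1 * Polynomial.X,
    Polynomial.C (q.2.2 - q.2.1 * q.1) + Polynomial.C (q.1 ^ 2) * Polynomial.X]

/-- the point with parameter `u` on the line of `q`. -/
def pt (q : K × K × K) (u : K) : Fin 3 → K :=
  ![u, q.2.1 - q.1 * u, q.2.2 - q.2.1 * q.1 + q.1 ^ 2 * u]

/-- two lines meet -/
def Meet (p q : K × K × K) : Prop := ∃ u, pt p u = pt q u

lemma Meet.symm {p q : K × K × K} (h : Meet p q) : Meet q p := by
  obtain ⟨u, hu⟩ := h; exact ⟨u, hu.symm⟩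

lemma eval_res (q : K × K × K) (u : K) (F : MvPolynomial (Fin 3) K) :
    (res q F).eval u = MvPolynomial.eval (pt q u) F := by
  have : ((Polynomial.aeval u : Polynomial K →ₐ[K] K).comp (res q)) = MvPolynomial.aeval (pt q u) := by
    apply MvPolynomial.algHom_ext
    intro i
    fin_cases i <;> simp [res, pt]
  have h2 := DFunLike.congr_fun this F
  rw [AlgHom.comp_apply, Polynomial.coe_aeval_eq_eval, MvPolynomial.aeval_eq_eval] at h2
  exact h2

lemma natDegree_res (q : K × K × K) (F : MvPolynomial (Fin 3) K) :
    (res q F).natDegree ≤ F.totalDegree := by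
  have : ∀ s ∈ F.support, (res q (monomial s (coeff s F))).natDegree ≤ F.totalDegree := by
    intro s hs
    refine le_trans ?_ (le_totalDegree hs)
    rw [res, aeval_monomial]
    refine (Polynomial.natDegree_C_mul_le _ _).trans ?_
    rw [Finsupp.prod, Finsupp.sum]
    refine (Polynomial.natDegree_prod_le _ _).trans ?_
    refine Finset.sum_le_sum ?_
    intro i _
    refine (Polynomial.natDegree_pow_le).trans ?_
    have : (![Polynomial.X, Polynomial.C q.2.1 - Polynomial.C q.1 * Polynomial.X,
      Polynomial.C (q.2.2 - q.2.1 * q.1) + Polynomial.C (q.1 ^ 2) * Polynomial.X] i : Polynomial K).natDegree ≤ 1 := by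
      fin_cases i
      · simp
      · show (Polynomial.C q.2.1 - Polynomial.C q.1 * Polynomial.X : Polynomial K).natDegree ≤ 1
        compute_degree
      · show (Polynomial.C (q.2.2 - q.2.1 * q.1) + Polynomial.C (q.1 ^ 2) * Polynomial.X : Polynomial K).natDegree ≤ 1
        compute_degree
    nlinarith
  conv_lhs => rw [F.as_sum, map_sum]
  exact Polynomial.natDegree_sum_le_of_forall_le _ _ this

lemma deriv_res (q : K × K × K) (F : MvPolynomial (Fin 3) K) :
    Polynomial.derivative (res q F) = res q (pderiv 0 F) - Polynomial.C q.1 * res q (pderiv 1 F)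
      + Polynomial.C (q.1 ^ 2) * res q (pderiv 2 F) := by
  induction F using MvPolynomial.induction_on with
  | C a => simp [res]
  | add f g hf hg => simp only [map_add, hf, hg]; ring
  | mul_X f i hf =>
    rw [map_mul, Polynomial.derivative_mul, hf]
    have : Polynomial.derivative (res q (X i)) = res q (pderiv 0 (X i)) - Polynomial.C q.1 * res q (pderiv 1 (X i))
      + Polynomial.C (q.1 ^ 2) * res q (pderiv 2 (X i)) := by
      fin_cases i <;> simp [res, pderiv_X, ← Polynomial.C_pow, -map_pow]
    rw [this]
    simp only [Derivation.leibniz, map_add, smul_eq_mul, map_mul]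
    ring

lemma pderiv_comm' (i j : Fin 3) (F : MvPolynomial (Fin 3) K) :
    pderiv i (pderiv j F) = pderiv j (pderiv i F) := by
  have : ⁅(pderiv i : Derivation K (MvPolynomial (Fin 3) K) (MvPolynomial (Fin 3) K)), (pderiv j : Derivation K (MvPolynomial (Fin 3) K) (MvPolynomial (Fin 3) K))⁆ = 0 := by
    apply MvPolynomial.derivation_ext
    intro k
    rw [Derivation.commutator_apply]
    simp only [pderiv_X]
    fin_cases i <;> fin_cases j <;> fin_cases k <;> simp [Pi.single_apply]
  have h2 := DFunLike.congr_fun this F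
  rw [Derivation.commutator_apply] at h2
  simpa [sub_eq_zero] using h2

lemma totalDegree_pderiv_le (i : Fin 3) (F : MvPolynomial (Fin 3) K) :
    (pderiv i F).totalDegree ≤ F.totalDegree - 1 := by
  rw [pderiv_def] 
  rw [F.as_sum, map_sum, ← F.as_sum]
  refine totalDegree_finsetSum_le ?_
  intro s hs
  rw [← pderiv_def, pderiv_monomial]
  by_cases h : s i = 0
  · simp [h]
  refine (totalDegree_monomial_le _ _).trans ?_
  have h1 := le_totalDegree hs
  have h3 : Finsupp.single i 1 ≤ s := by
    rw [Finsupp.single_le_iff]; omega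
  have h4 : (s - Finsupp.single i 1) + Finsupp.single i 1 = s := tsub_add_cancel_of_le h3
  have h5 : (s.sum fun _ e => e) = ((s - Finsupp.single i 1).sum fun _ e => e) + 1 := by
    conv_lhs => rw [← h4]
    rw [Finsupp.sum_add_index' (by simp) (by simp)]
    simp
  change (s - Finsupp.single i 1).sum (fun _ e => e) ≤ _
  omega

lemma eq_C_of_pderiv_eq_zero (p : ℕ) [CharP K p] (F : MvPolynomial (Fin 3) K) (hd : F.totalDegree < p)
    (h : ∀ i, pderiv i F = 0) : F.totalDegree = 0 := by
  by_contra hne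
  have : ∃ s ∈ F.support, ∃ i, s i ≠ 0 := by
    by_contra hcon
    push Not at hcon
    apply hne
    apply Nat.eq_zero_of_le_zero
    refine Finset.sup_le ?_
    intro s hs
    simp [Finsupp.sum, hcon s hs]
  obtain ⟨s, hs, i, hi⟩ := this
  have hc : coeff (s - Finsupp.single i 1) (pderiv i F) = 0 := by rw [h i]; simp
  have h3 : Finsupp.single i 1 ≤ s := by
    rw [Finsupp.single_le_iff]; omega
  have h4 : (s - Finsupp.single i 1) + Finsupp.single i 1 = s := tsub_add_cancel_of_le h3
  have key : coeff (s - Finsupp.single i 1) (pderiv i F) = coeff s F * (s i : K) := by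
    rw [pderiv_def] 
    conv_lhs => rw [F.as_sum, map_sum, coeff_sum]
    rw [Finset.sum_eq_single s]
    · rw [← pderiv_def, pderiv_monomial, coeff_monomial, if_pos rfl]
    · intro t ht hts
      rw [← pderiv_def, pderiv_monomial, coeff_monomial]
      split_ifs with he
      · by_cases hti : t i = 0
        · simp [hti]
        · exfalso; apply hts
          have h3' : Finsupp.single i 1 ≤ t := by
            rw [Finsupp.single_le_iff]; omega
          rw [← h4, ← he, tsub_add_cancel_of_le h3']
      · rfl
    · intro hn; exact absurd hs hn
  rw [key] at hc
  rcases mul_eq_zero.mp hc with h1 | h1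
  · exact (MvPolynomial.mem_support_iff.mp hs) h1
  · rw [CharP.cast_eq_zero_iff K p] at h1
    have h6 := le_totalDegree hs
    have h7 : s i ≤ s.sum (fun _ e => e) := by
      rw [Finsupp.sum_fintype _ _ (by simp)]
      exact Finset.single_le_sum (f := fun j => s j) (fun _ _ => Nat.zero_le _) (Finset.mem_univ i)
    have := Nat.le_of_dvd (Nat.pos_of_ne_zero hi) h1
    omega

/-- number of lines of a skew family meeting `q` at roots of a nonzero polynomial -/
lemma card_meet_le (𝒜 : Finset (K × K × K)) (hA : ∀ p ∈ 𝒜, ∀ p' ∈ 𝒜, Meet p p' → p = p')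
    (q : K × K × K) (f : Polynomial K) (hf : f ≠ 0)
    (h : ∀ p ∈ 𝒜, ∃ u, pt p u = pt q u ∧ f.eval u = 0) : 𝒜.card ≤ f.natDegree := by
  classical
  choose! u hu hr using h
  have hinj : Set.InjOn u 𝒜 := by
    intro p hp p' hp' he
    apply hA p hp p' hp'
    refine ⟨u p, ?_⟩
    rw [hu p hp, he, hu p' hp']
  rw [← Finset.card_image_of_injOn hinj]
  refine le_trans (Finset.card_le_card ?_) ((Multiset.toFinset_card_le f.roots).trans (Polynomial.card_roots' f))
  intro v hv
  obtain ⟨p, hp, rfl⟩ := Finset.mem_image.mp hv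
  simp [hf, hr p hp]

lemma wronsk (p : ℕ) [CharP K p] (f g : Polynomial K) (hg : g ≠ 0) (hfd : f.natDegree < p) (hgd : g.natDegree < p)
    (h : Polynomial.derivative f * g = f * Polynomial.derivative g) : ∃ c, f = Polynomial.C c * g := by
  have key : ∀ f : Polynomial K, f ≠ 0 → f.natDegree < p →
     Polynomial.derivative f * g = f * Polynomial.derivative g → f.natDegree = g.natDegree := by
    intro f hf hfd h
    by_contra hne
    have hc : ∀ n m : ℕ, n = f.natDegree → m = g.natDegree → (n + m ≠ 0) →
       ((n : K) - m) * (f.leadingCoeff * g.leadingCoeff) = 0 := by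
      intro n m hn hm h0
      have e1 : (Polynomial.derivative f * g).coeff (n + m - 1) = n * (f.leadingCoeff * g.leadingCoeff) := by
        rcases Nat.eq_zero_or_pos n with h1 | h1
        · have : Polynomial.derivative f = 0 := Polynomial.derivative_of_natDegree_zero (by omega)
          simp [this, h1]
        · have : n + m - 1 = (n - 1) + m := by omega
          rw [this, Polynomial.coeff_mul_add_eq_of_natDegree_le (by have := Polynomial.natDegree_derivative_le f; omega) (by omega)]
          rw [Polynomial.coeff_derivative, Nat.sub_add_cancel h1, hn, hm]
          simp only [Polynomial.coeff_natDegree]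
          rw [← hn]
          push_cast [h1]; ring
      have e2 : (f * Polynomial.derivative g).coeff (n + m - 1) = m * (f.leadingCoeff * g.leadingCoeff) := by
        rcases Nat.eq_zero_or_pos m with h1 | h1
        · have : Polynomial.derivative g = 0 := Polynomial.derivative_of_natDegree_zero (by omega)
          simp [this, h1]
        · have : n + m - 1 = n + (m - 1) := by omega
          rw [this, Polynomial.coeff_mul_add_eq_of_natDegree_le (by omega) (by have := Polynomial.natDegree_derivative_le g; omega)]
          rw [Polynomial.coeff_derivative, Nat.sub_add_cancel h1, hn, hm]
          simp only [Polynomial.coeff_natDegree]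
          rw [← hm]
          push_cast [h1]; ring
      rw [sub_mul, ← e1, ← e2, h, sub_self]
    have := hc _ _ rfl rfl (by omega)
    rcases mul_eq_zero.mp this with h1 | h1
    · rw [sub_eq_zero] at h1
      apply hne
      exact (CharP.natCast_injOn_Iio K p) hfd hgd h1
    · rcases mul_eq_zero.mp h1 with h2 | h2
      · exact hf (Polynomial.leadingCoeff_eq_zero.mp h2)
      · exact hg (Polynomial.leadingCoeff_eq_zero.mp h2)
  by_cases hf : f = 0
  · exact ⟨0, by simp [hf]⟩
  have hdeg := key f hf hfd h
  have hlg : g.leadingCoeff ≠ 0 := by simpa using hg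
  refine ⟨f.leadingCoeff / g.leadingCoeff, ?_⟩
  by_contra hne
  set c := f.leadingCoeff / g.leadingCoeff with hcdef
  have hc : c ≠ 0 := div_ne_zero (by simpa using hf) hlg
  have hsub : f - Polynomial.C c * g ≠ 0 := sub_ne_zero.mpr hne
  have hdg : (Polynomial.C c * g).natDegree = g.natDegree := Polynomial.natDegree_C_mul hc
  have hlt : (f - Polynomial.C c * g).degree < f.degree := by
    apply Polynomial.degree_sub_lt_left _ hf
    · rw [Polynomial.leadingCoeff_mul, Polynomial.leadingCoeff_C, hcdef]; field_simp
    · rw [Polynomial.degree_eq_natDegree hf, Polynomial.degree_eq_natDegree (mul_ne_zero (by simpa using hc) hg), hdg, hdeg]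
  have hlt' := Polynomial.natDegree_lt_natDegree hsub hlt
  have := key _ hsub (by omega) (by
    simp only [Polynomial.derivative_sub, Polynomial.derivative_mul, Polynomial.derivative_C]
    linear_combination h)
  omega

end basics
section doubly
variable {K : Type*} [Field K]

noncomputable def D0 (x : K) (F : MvPolynomial (Fin 3) K) : MvPolynomial (Fin 3) K :=
  pderiv 0 F - C x * pderiv 1 F + C (x ^ 2) * pderiv 2 F

noncomputable def D1 (x : K) (F : MvPolynomial (Fin 3) K) : MvPolynomial (Fin 3) K :=
  pderiv 1 F - C (2 * x) * pderiv 2 F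

lemma D01_comm (x : K) (F : MvPolynomial (Fin 3) K) : D0 x (D1 x F) = D1 x (D0 x F) := by
  simp only [D0, D1, map_sub, map_add, pderiv_C_mul]
  rw [pderiv_comm' 1 0, pderiv_comm' 2 0, pderiv_comm' 2 1]
  ring

lemma D02_comm (x : K) (F : MvPolynomial (Fin 3) K) : D0 x (pderiv 2 F) = pderiv 2 (D0 x F) := by
  simp only [D0, map_sub, map_add, pderiv_C_mul]
  rw [pderiv_comm' 2 0, pderiv_comm' 2 1]

lemma res_C (q : K × K × K) (a : K) : res q (C a) = Polynomial.C a := by simp [res]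

lemma deriv_res' (q : K × K × K) (F : MvPolynomial (Fin 3) K) :
    Polynomial.derivative (res q F) = res q (D0 q.1 F) := by
  rw [deriv_res, D0]; simp only [map_add, map_sub, map_mul, res_C]

noncomputable def polyA (P : MvPolynomial (Fin 3) K) : MvPolynomial (Fin 3) K :=
  pderiv 0 (pderiv 0 P) * pderiv 2 P ^ 3
  - (pderiv 1 (pderiv 1 P) + 2 * pderiv 0 (pderiv 2 P)) * (pderiv 2 P ^ 2 * pderiv 0 P)
  + 2 * pderiv 1 (pderiv 2 P) * (pderiv 2 P * pderiv 0 P * pderiv 1 P)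
  - pderiv 2 (pderiv 2 P) * (pderiv 0 P * (pderiv 1 P ^ 2 - pderiv 0 P * pderiv 2 P))

noncomputable def polyB (P : MvPolynomial (Fin 3) K) : MvPolynomial (Fin 3) K :=
  - 2 * pderiv 0 (pderiv 1 P) * pderiv 2 P ^ 3
  + (pderiv 1 (pderiv 1 P) + 2 * pderiv 0 (pderiv 2 P)) * (pderiv 2 P ^ 2 * pderiv 1 P)
  - 2 * pderiv 1 (pderiv 2 P) * (pderiv 2 P * (pderiv 1 P ^ 2 - pderiv 0 P * pderiv 2 P))
  + pderiv 2 (pderiv 2 P) * (pderiv 1 P ^ 3 - 2 * pderiv 0 P * pderiv 1 P * pderiv 2 P)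

noncomputable def quot (x : K) (P : MvPolynomial (Fin 3) K) : MvPolynomial (Fin 3) K :=
  pderiv 2 (pderiv 2 P) * pderiv 2 P ^ 2 * C x ^ 2
  + (- 2 * pderiv 1 (pderiv 2 P) * pderiv 2 P ^ 2 + pderiv 2 (pderiv 2 P) * pderiv 1 P * pderiv 2 P) * C x
  + ((pderiv 1 (pderiv 1 P) + 2 * pderiv 0 (pderiv 2 P)) * pderiv 2 P ^ 2
    - 2 * pderiv 1 (pderiv 2 P) * pderiv 1 P * pderiv 2 P
    + pderiv 2 (pderiv 2 P) * (pderiv 1 P ^ 2 - pderiv 0 P * pderiv 2 P))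

noncomputable def quot' (x : K) (P : MvPolynomial (Fin 3) K) : MvPolynomial (Fin 3) K :=
  2 * (pderiv 2 (pderiv 2 P) * pderiv 2 P ^ 2 * C x)
  + (- 2 * pderiv 1 (pderiv 2 P) * pderiv 2 P ^ 2 + pderiv 2 (pderiv 2 P) * pderiv 1 P * pderiv 2 P)

lemma ident1 (x : K) (P : MvPolynomial (Fin 3) K) :
    polyA P + C x * polyB P = pderiv 2 P ^ 3 * D0 x (D0 x P) - quot x P * D0 x P := by
  simp only [D0, polyA, polyB, quot, map_sub, map_add, pderiv_C_mul]
  rw [C_pow]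
  rw [pderiv_comm' 1 0, pderiv_comm' 2 0, pderiv_comm' 2 1]
  ring

lemma ident2 (x : K) (P : MvPolynomial (Fin 3) K) :
    polyB P = pderiv 2 P ^ 3 * (- 2 * D0 x (D1 x P)) - quot' x P * D0 x P + quot x P * D1 x P := by
  simp only [D0, D1, polyB, quot, quot', map_sub, pderiv_C_mul]
  rw [C_pow, C_mul, pderiv_comm' 2 1]
  rw [show (C 2 : MvPolynomial (Fin 3) K) = 2 from rfl]
  ring

lemma res_D0_eq_zero (q : K × K × K) (P : MvPolynomial (Fin 3) K) (h : res q P = 0) :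
    res q (D0 q.1 P) = 0 := by rw [← deriv_res', h]; simp

lemma ab_zero (p q : K × K × K) (P : MvPolynomial (Fin 3) K) (hp : res p P = 0) (hq : res q P = 0)
    (u : K) (hu : pt p u = pt q u) (hne : p.1 ≠ q.1) :
    (res q (polyA P)).eval u = 0 ∧ (res q (polyB P)).eval u = 0 := by
  have h1 : ∀ r : K × K × K, res r P = 0 →
      MvPolynomial.eval (pt r u) (polyA P) + r.1 * MvPolynomial.eval (pt r u) (polyB P) = 0 := by
    intro r hr
    have h2 := congrArg (fun F => (res r F).eval u) (ident1 r.1 P)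
    have h3 := res_D0_eq_zero r P hr
    have h4 := res_D0_eq_zero r _ h3
    simp only [map_sub, map_mul, h3, h4, mul_zero, sub_zero, Polynomial.eval_zero] at h2
    rw [eval_res] at h2
    simpa using h2
  have hP := h1 p hp
  have hQ := h1 q hq
  rw [hu] at hP
  rw [eval_res, eval_res]
  set a := MvPolynomial.eval (pt q u) (polyA P)
  set b := MvPolynomial.eval (pt q u) (polyB P)
  have hb : (p.1 - q.1) * b = 0 := by linear_combination hP - hQ
  have hb0 : b = 0 := by
    rcases mul_eq_zero.mp hb with h | h
    · exact absurd (sub_eq_zero.mp h) hne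
    · exact h
  refine ⟨?_, hb0⟩
  rw [hb0] at hQ; simpa using hQ

lemma case3 (p : ℕ) [CharP K p] (q : K × K × K) (P : MvPolynomial (Fin 3) K) (hd : 2 * P.totalDegree + 1 < p)
    (hq : res q P = 0) (hA : P ∣ polyA P) (hB : P ∣ polyB P)
    (hG : res q (pderiv 2 P) ≠ 0) (hH : res q (D1 q.1 P) ≠ 0) :
    ∃ κ c : K, - res q (pderiv 2 P) = (Polynomial.C κ * Polynomial.X + Polynomial.C c) * res q (D1 q.1 P) := by
  set x := q.1 with hx
  set G := res q (pderiv 2 P) with hGd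
  set H := - res q (D1 x P) with hHd
  have hH' : H ≠ 0 := by simpa [hHd] using hH
  have eH : res q (D1 x P) = - H := by simp [hHd]
  set U := D0 x P with hU
  have rU : res q U = 0 := res_D0_eq_zero q P hq
  have rW : res q (D0 x U) = 0 := res_D0_eq_zero q U rU
  have rWW : res q (D0 x (D0 x U)) = 0 := res_D0_eq_zero q _ rW
  have rD1U : res q (D1 x U) = - Polynomial.derivative H := by
    rw [hU, ← D01_comm, ← deriv_res', eH, Polynomial.derivative_neg]
  have rD2U : res q (pderiv 2 U) = Polynomial.derivative G := by
    rw [hU, ← D02_comm, ← deriv_res']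
  have rD1W : res q (D1 x (D0 x U)) = - Polynomial.derivative (Polynomial.derivative H) := by
    rw [← D01_comm, ← deriv_res', rD1U, Polynomial.derivative_neg]
  have rD2W : res q (pderiv 2 (D0 x U)) = Polynomial.derivative (Polynomial.derivative G) := by
    rw [← D02_comm, ← deriv_res', rD2U]
  -- the derivation
  let Δ : MvPolynomial (Fin 3) K → Polynomial K := fun F =>
    G ^ 2 * res q (D0 x F) + G * H * res q (D1 x F) + H ^ 2 * res q (pderiv 2 F)
  have Δmul : ∀ F F', Δ (F * F') = res q F * Δ F' + res q F' * Δ F := by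
    intro F F'
    simp only [Δ, D0, D1, Derivation.leibniz, smul_eq_mul, map_add, map_sub, map_mul]
    ring
  have Δadd : ∀ F F', Δ (F + F') = Δ F + Δ F' := by
    intro F F'
    simp only [Δ, D0, D1, map_add, map_sub, map_mul]
    ring
  have Δsub : ∀ F F', Δ (F - F') = Δ F - Δ F' := by
    intro F F'
    simp only [Δ, D0, D1, map_add, map_sub, map_mul]
    ring
  have ΔP : Δ P = 0 := by
    simp only [Δ]
    rw [← hU, rU, eH, ← hGd]; ring
  have ΔU : Δ U = - G * H * Polynomial.derivative H + H ^ 2 * Polynomial.derivative G := by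
    simp only [Δ]
    rw [rW, rD1U, rD2U]; ring
  have ΔW : Δ (D0 x U) = - G * H * Polynomial.derivative (Polynomial.derivative H)
      + H ^ 2 * Polynomial.derivative (Polynomial.derivative G) := by
    simp only [Δ]
    rw [rWW, rD1W, rD2W]; ring
  have hAB : P ∣ polyA P + C x * polyB P := dvd_add hA (Dvd.dvd.mul_left hB _)
  obtain ⟨T, hT⟩ := hAB
  have e1 : Δ (polyA P + C x * polyB P) = 0 := by
    rw [hT, Δmul, hq, ΔP]; ring
  rw [ident1, Δsub, Δmul, Δmul, rU, rW, ΔU, ΔW, map_pow, ← hGd] at e1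
  obtain ⟨T', hT'⟩ := hB
  have e2 : res q (polyB P) = 0 := by rw [hT', map_mul, hq, zero_mul]
  rw [ident2 x P, D01_comm, ← hU] at e2
  simp only [map_add, map_sub, map_mul, map_pow, map_neg, rU, rD1U, eH, ← hGd] at e2
  have e2' : res q (quot x P) * H = 2 * G ^ 3 * Polynomial.derivative H := by
    have : res q (2 : MvPolynomial (Fin 3) K) = 2 := map_ofNat _ 2
    rw [this] at e2
    linear_combination -e2
  have e3 : G ^ 3 * H * (H * (H * Polynomial.derivative (Polynomial.derivative G) - G * Polynomial.derivative (Polynomial.derivative H))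
     - 2 * Polynomial.derivative H * (H * Polynomial.derivative G - G * Polynomial.derivative H)) = 0 := by
    linear_combination H * e1 + (- G * H * Polynomial.derivative H + H ^ 2 * Polynomial.derivative G) * e2'
  have e4 : H * (H * Polynomial.derivative (Polynomial.derivative G) - G * Polynomial.derivative (Polynomial.derivative H))
     - 2 * Polynomial.derivative H * (H * Polynomial.derivative G - G * Polynomial.derivative H) = 0 := by
    rcases mul_eq_zero.mp e3 with h | h
    · exact absurd h (mul_ne_zero (pow_ne_zero _ hG) hH')
    · exact h
  have hdG : G.natDegree ≤ P.totalDegree - 1 := (natDegree_res q _).trans (totalDegree_pderiv_le _ _)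
  have hdH : H.natDegree ≤ P.totalDegree - 1 := by
    rw [hHd, Polynomial.natDegree_neg]
    refine (natDegree_res q _).trans ?_
    rw [D1]
    refine (totalDegree_sub _ _).trans (max_le (totalDegree_pderiv_le _ _) ?_)
    refine (totalDegree_mul _ _).trans ?_
    rw [totalDegree_C, zero_add]
    exact totalDegree_pderiv_le _ _
  have hdG' := Polynomial.natDegree_derivative_le G
  have hdH' := Polynomial.natDegree_derivative_le H
  obtain ⟨κ, hκ⟩ := wronsk p (H * Polynomial.derivative G - G * Polynomial.derivative H) (H ^ 2) (pow_ne_zero _ hH')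
    (by
      refine lt_of_le_of_lt (Polynomial.natDegree_sub_le _ _) (max_lt ?_ ?_)
      · refine lt_of_le_of_lt (Polynomial.natDegree_mul_le) ?_
        omega
      · refine lt_of_le_of_lt (Polynomial.natDegree_mul_le) ?_
        omega)
    (by rw [Polynomial.natDegree_pow]; omega)
    (by
      simp only [Polynomial.derivative_sub, Polynomial.derivative_mul, Polynomial.derivative_pow]
      simp only [Nat.cast_ofNat, map_ofNat]
      norm_num
      linear_combination H * e4)
  obtain ⟨c, hc⟩ := wronsk p (G - Polynomial.C κ * Polynomial.X * H) H hH'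
    (by
      refine lt_of_le_of_lt (Polynomial.natDegree_sub_le _ _) (max_lt (by omega) ?_)
      refine lt_of_le_of_lt (Polynomial.natDegree_mul_le) ?_
      have : (Polynomial.C κ * Polynomial.X : Polynomial K).natDegree ≤ 1 := by compute_degree
      omega)
    (by omega)
    (by
      simp only [Polynomial.derivative_sub, Polynomial.derivative_mul, Polynomial.derivative_C, Polynomial.derivative_X]
      linear_combination hκ)
  refine ⟨κ, c, ?_⟩
  rw [eH]
  linear_combination -hc

end doubly
section dims
variable {K : Type*} [Field K]

lemma finrank_h (D : ℕ) :
    6 * Module.finrank K (restrictTotalDegree (Fin 3) K D) = (D + 1) * (D + 2) * (D + 3) := by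
  classical
  have h1 : Module.finrank K (restrictTotalDegree (Fin 3) K D)
      = Nat.card {n : Fin 3 →₀ ℕ | (n.sum fun _ e => e) ≤ D} :=
    Module.finrank_eq_nat_card_basis (basisRestrictSupport K _)
  have h2 : {n : Fin 3 →₀ ℕ | (n.sum fun _ e => e) ≤ D}
      = ((Finset.range (D + 1)).biUnion fun k => (Finset.univ : Finset (Fin 3)).finsuppAntidiag k : Finset _) := by
    ext s
    simp only [Set.mem_setOf_eq, Finset.coe_biUnion, Set.mem_iUnion, Finset.mem_coe, mem_finsuppAntidiag,
      Finset.mem_range, Finset.subset_univ, and_true]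
    rw [Finsupp.sum_fintype _ _ (by simp)]
    constructor
    · intro h; exact ⟨_, Nat.lt_succ_of_le h, rfl⟩
    · rintro ⟨k, hk, rfl⟩; exact Nat.le_of_lt_succ hk
  rw [h1, h2]
  rw [Nat.card_coe_set_eq, Set.ncard_coe_finset, Finset.card_biUnion]
  · simp only [card_finsuppAntidiag_nat_eq_choose, Finset.card_univ, Fintype.card_fin]
    induction D with
    | zero => simp
    | succ D ih =>
      rw [Finset.sum_range_succ, mul_add, ih (by
        exact Module.finrank_eq_nat_card_basis (basisRestrictSupport K _)) (by
          ext s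
          simp only [Set.mem_setOf_eq, Finset.coe_biUnion, Set.mem_iUnion, Finset.mem_coe, mem_finsuppAntidiag,
            Finset.mem_range, Finset.subset_univ, and_true]
          rw [Finsupp.sum_fintype _ _ (by simp)]
          constructor
          · intro h; exact ⟨_, Nat.lt_succ_of_le h, rfl⟩
          · rintro ⟨k, hk, rfl⟩; exact Nat.le_of_lt_succ hk)]
      have h3 : (3 + (D + 1) - 1).choose (D + 1) = (D + 3).choose 2 := by
        rw [← Nat.choose_symm (by omega)]
        congr 1 <;> omega
      rw [h3]
      have h4 : (D + 3).choose 2 * 2 = (D + 3) * (D + 2) := by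
        have := Nat.add_one_mul_choose_eq (D + 2) 1
        simp only [Nat.choose_one_right, Nat.succ_eq_add_one] at this
        linarith
      nlinarith
  · intro a _ b _ hab
    rw [Function.onFun, Finset.disjoint_left]
    intro s hs hs'
    simp only [mem_finsuppAntidiag] at hs hs'
    exact hab (hs.1.symm.trans hs'.1)

lemma siegel (𝒜 : Finset (K × K × K)) (d : ℕ) (h : 6 * 𝒜.card < (d + 2) * (d + 3)) :
    ∃ P : MvPolynomial (Fin 3) K, P ≠ 0 ∧ P.totalDegree ≤ d ∧ ∀ q ∈ 𝒜, res q P = 0 := by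
  classical
  let f : restrictTotalDegree (Fin 3) K d →ₗ[K] (𝒜 × Fin (d + 1) → K) :=
    LinearMap.pi fun ie => (Polynomial.lcoeff K (ie.2 : ℕ)) ∘ₗ (res ie.1.1).toLinearMap ∘ₗ Submodule.subtype _
  have hk : LinearMap.ker f ≠ ⊥ := by
    apply LinearMap.ker_ne_bot_of_finrank_lt
    rw [Module.finrank_fintype_fun_eq_card, Fintype.card_prod, Fintype.card_coe, Fintype.card_fin]
    have := finrank_h (K := K) d
    nlinarith
  obtain ⟨P, hP, hne⟩ := Submodule.exists_mem_ne_zero_of_ne_bot hk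
  refine ⟨P.1, by simpa using hne, (mem_restrictTotalDegree _ _ _).mp P.2, ?_⟩
  intro q hq
  ext i
  by_cases hi : i < d + 1
  · have := congrFun (LinearMap.mem_ker.mp hP) (⟨q, hq⟩, ⟨i, hi⟩)
    simpa [f] using this
  · rw [Polynomial.coeff_eq_zero_of_natDegree_lt]; · simp
    have := natDegree_res q P.1
    have := (mem_restrictTotalDegree _ _ _).mp P.2
    omega

lemma sep (p q : K × K × K) (h : p ≠ q) :
    ∃ L : MvPolynomial (Fin 3) K, L.totalDegree ≤ 1 ∧ res q L = 0 ∧ res p L ≠ 0 := by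
  by_cases h1 : p.1 = q.1 ∧ p.2.1 = q.2.1
  · refine ⟨X 2 - C (q.2.2 - q.2.1 * q.1) - C (q.1 ^ 2) * X 0, ?_, ?_, ?_⟩
    · refine (totalDegree_sub _ _).trans (max_le ((totalDegree_sub _ _).trans (max_le ?_ ?_)) ?_)
      · simp
      · simp only [totalDegree_C]; omega
      · refine (totalDegree_mul _ _).trans ?_
        rw [totalDegree_C]; simp
    · simp [res]
    · intro h0
      have := congrArg (Polynomial.eval 0) h0
      simp [res] at this
      apply h
      rw [h1.1, h1.2] at this
      refine Prod.ext h1.1 (Prod.ext h1.2 ?_)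
      linear_combination this
  · refine ⟨X 1 - C q.2.1 + C q.1 * X 0, ?_, ?_, ?_⟩
    · refine (totalDegree_add _ _).trans (max_le ((totalDegree_sub _ _).trans (max_le ?_ ?_)) ?_)
      · simp
      · simp only [totalDegree_C]; omega
      · refine (totalDegree_mul _ _).trans ?_
        rw [totalDegree_C]; simp
    · simp [res]
    · intro h0
      have e0 := congrArg (Polynomial.eval 0) h0
      have e1 := congrArg (Polynomial.eval 1) h0
      simp [res] at e0 e1
      apply h1
      exact ⟨by linear_combination e0 - e1, by linear_combination e0⟩

lemma sep_prod (ℬ : Finset (K × K × K)) (p : K × K × K) (hp : p ∈ ℬ) :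
    ∃ L : MvPolynomial (Fin 3) K, L.totalDegree ≤ ℬ.card ∧ (∀ q ∈ ℬ, q ≠ p → res q L = 0) ∧ res p L ≠ 0 := by
  classical
  have := fun q => sep p q
  choose! L h1 h2 h3 using this
  refine ⟨∏ q ∈ ℬ.erase p, L q, ?_, ?_, ?_⟩
  · refine (totalDegree_finset_prod _ _).trans ?_
    refine le_trans (Finset.sum_le_card_nsmul _ _ 1 ?_) ?_
    · intro q hq; exact h1 q (Finset.ne_of_mem_erase hq).symm
    · simp only [smul_eq_mul, mul_one]; exact Finset.card_le_card (Finset.erase_subset _ _)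
  · intro q hq hqp
    rw [map_prod]
    exact Finset.prod_eq_zero (Finset.mem_erase.mpr ⟨hqp, hq⟩) (h2 q hqp.symm)
  · rw [map_prod]
    exact Finset.prod_ne_zero_iff.mpr fun q hq => h3 q (Finset.ne_of_mem_erase hq).symm

lemma bezout_aux (P Q : MvPolynomial (Fin 3) K) (hP : Prime P) (hPQ : ¬ P ∣ Q) (ℬ : Finset (K × K × K))
    (h1 : ∀ q ∈ ℬ, res q P = 0) (h2 : ∀ q ∈ ℬ, res q Q = 0) (N E : ℕ)
    (hE : P.totalDegree + Q.totalDegree + N = ℬ.card + E) :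
    Module.finrank K (restrictTotalDegree (Fin 3) K (Q.totalDegree + N)) +
    Module.finrank K (restrictTotalDegree (Fin 3) K (P.totalDegree + N)) + ℬ.card * E ≤
    Module.finrank K (restrictTotalDegree (Fin 3) K (P.totalDegree + Q.totalDegree + N)) +
    Module.finrank K (restrictTotalDegree (Fin 3) K N) := by
  classical
  have hP0 := hP.ne_zero
  have hQ0 : Q ≠ 0 := by rintro rfl; exact hPQ (dvd_zero _)
  have := fun p => sep_prod ℬ p
  choose! F hF1 hF2 hF3 using this
  let G : (ℬ × Fin E → K) →ₗ[K] MvPolynomial (Fin 3) K :=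
    Fintype.linearCombination K (fun ie : ℬ × Fin E => F ie.1.1 * X 0 ^ (ie.2 : ℕ))
  let Φ : (restrictTotalDegree (Fin 3) K (Q.totalDegree + N)) × (restrictTotalDegree (Fin 3) K (P.totalDegree + N)) ×
     (ℬ × Fin E → K) →ₗ[K] MvPolynomial (Fin 3) K :=
    (LinearMap.mulLeft K P ∘ₗ Submodule.subtype _).coprod
      ((LinearMap.mulLeft K Q ∘ₗ Submodule.subtype _).coprod G)
  have hΦ : ∀ v, Φ v = P * v.1.1 + (Q * v.2.1.1 + ∑ ie : ℬ × Fin E, v.2.2 ie • (F ie.1.1 * X 0 ^ (ie.2 : ℕ))) := by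
    intro v; rfl
  have hrange : LinearMap.range Φ ≤ restrictTotalDegree (Fin 3) K (P.totalDegree + Q.totalDegree + N) := by
    rintro _ ⟨v, rfl⟩
    rw [hΦ]
    have m1 := (mem_restrictTotalDegree _ _ _).mp v.1.2
    have m2 := (mem_restrictTotalDegree _ _ _).mp v.2.1.2
    refine Submodule.add_mem _ ?_ (Submodule.add_mem _ ?_ (Submodule.sum_mem _ fun ie _ => Submodule.smul_mem _ _ ?_))
    · rw [mem_restrictTotalDegree]; refine (totalDegree_mul _ _).trans ?_; omega
    · rw [mem_restrictTotalDegree]; refine (totalDegree_mul _ _).trans ?_; omega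
    · rw [mem_restrictTotalDegree]; refine (totalDegree_mul _ _).trans ?_
      rw [totalDegree_X_pow]
      have := hF1 _ ie.1.2
      have := ie.2.2
      omega
  let Ψ : restrictTotalDegree (Fin 3) K N →ₗ[K] (restrictTotalDegree (Fin 3) K (Q.totalDegree + N)) × (restrictTotalDegree (Fin 3) K (P.totalDegree + N)) ×
     (ℬ × Fin E → K) :=
    ((LinearMap.mulLeft K (-Q)).restrict (by
      intro T hT
      rw [mem_restrictTotalDegree] at hT ⊢
      refine (totalDegree_mul _ _).trans ?_
      rw [totalDegree_neg]; omega)).prod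
     (((LinearMap.mulLeft K P).restrict (by
      intro T hT
      rw [mem_restrictTotalDegree] at hT ⊢
      refine (totalDegree_mul _ _).trans ?_
      omega)).prod 0)
  have hker : LinearMap.ker Φ ≤ LinearMap.range Ψ := by
    intro v hv
    rw [LinearMap.mem_ker, hΦ] at hv
    have hg : v.2.2 = 0 := by
      have hj : ∀ j : ℬ, ∑ e : Fin E, Polynomial.monomial (e : ℕ) (v.2.2 (j, e)) = 0 := by
        intro j
        have h3 := congrArg (res j.1) hv
        simp only [map_add, map_mul, h1 _ j.2, h2 _ j.2, zero_mul, zero_add, map_zero, map_sum, map_smul] at h3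
        rw [Fintype.sum_prod_type, Finset.sum_eq_single j] at h3
        · have h4 : res j.1 (F j.1) * ∑ e : Fin E, Polynomial.monomial (e : ℕ) (v.2.2 (j, e)) = 0 := by
            rw [← h3, Finset.mul_sum]
            refine Finset.sum_congr rfl fun e _ => ?_
            rw [← Polynomial.C_mul_X_pow_eq_monomial]
            simp only [map_pow, Polynomial.smul_eq_C_mul]
            have : res j.1 (X 0) = Polynomial.X := by simp [res]
            rw [this]; ring
          exact (mul_eq_zero.mp h4).resolve_left (hF3 _ j.2)
        · intro i _ hij
          refine Finset.sum_eq_zero fun e _ => ?_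
          rw [hF2 i.1 i.2 j.1 j.2 (fun h => hij (Subtype.ext h.symm))]
          simp
        · simp
      ext ⟨j, e⟩
      have := congrArg (fun f => Polynomial.coeff f (e : ℕ)) (hj j)
      simp only [Polynomial.finset_sum_coeff, Polynomial.coeff_monomial, Polynomial.coeff_zero] at this
      rw [Finset.sum_eq_single e] at this
      · simpa using this
      · intro b _ hb
        rw [if_neg]; intro h; exact hb (Fin.ext h)
      · simp
    rw [hg] at hv
    simp only [Pi.zero_apply, zero_smul, Finset.sum_const_zero, add_zero] at hv
    have hdvd : P ∣ Q * v.2.1.1 := ⟨-v.1.1, by linear_combination hv⟩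
    obtain ⟨T, hT⟩ := (hP.dvd_or_dvd hdvd).resolve_left hPQ
    have hTd : T.totalDegree ≤ N := by
      by_cases hT0 : T = 0
      · simp [hT0]
      have m2 := (mem_restrictTotalDegree _ _ _).mp v.2.1.2
      rw [hT, totalDegree_mul_of_isDomain hP0 hT0] at m2
      omega
    refine ⟨⟨T, (mem_restrictTotalDegree _ _ _).mpr hTd⟩, ?_⟩
    refine Prod.ext (Subtype.ext ?_) (Prod.ext (Subtype.ext ?_) ?_)
    · show -Q * T = v.1.1
      rw [hT] at hv
      have : P * (v.1.1 + Q * T) = 0 := by linear_combination hv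
      have := (mul_eq_zero.mp this).resolve_left hP0
      linear_combination -this
    · exact hT.symm
    · exact hg.symm
  have r1 := LinearMap.finrank_range_add_finrank_ker Φ
  have r2 := Submodule.finrank_mono hrange
  have r3 := Submodule.finrank_mono hker
  have r4 := LinearMap.finrank_range_le Ψ
  rw [Module.finrank_prod, Module.finrank_prod, Module.finrank_fintype_fun_eq_card, Fintype.card_prod, Fintype.card_coe, Fintype.card_fin] at r1
  omega

lemma bezout (P Q : MvPolynomial (Fin 3) K) (hP : Prime P) (hPQ : ¬ P ∣ Q) (ℬ : Finset (K × K × K))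
    (h1 : ∀ q ∈ ℬ, res q P = 0) (h2 : ∀ q ∈ ℬ, res q Q = 0) :
    ℬ.card ≤ P.totalDegree * Q.totalDegree := by
  by_contra hcon
  push Not at hcon
  set d1 := P.totalDegree with hd1
  set d2 := Q.totalDegree with hd2
  set n := ℬ.card with hn
  obtain ⟨N, hN⟩ : ∃ N, N = n * n + d1 * d2 * (d1 + d2 + 2) + 1 := ⟨_, rfl⟩
  have hnN : n ≤ N := by
    have := Nat.le_mul_self n
    rw [hN]
    have h0 := Nat.zero_le (d1 * d2 * (d1 + d2 + 2))
    omega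
  obtain ⟨E, hE⟩ : ∃ E, d1 + d2 + N = n + E := ⟨d1 + d2 + N - n, by omega⟩
  have := bezout_aux P Q hP hPQ ℬ h1 h2 N E hE
  rw [← hd1, ← hd2, ← hn] at this
  have e1 := finrank_h (K := K) (d2 + N)
  have e2 := finrank_h (K := K) (d1 + N)
  have e3 := finrank_h (K := K) (d1 + d2 + N)
  have e4 := finrank_h (K := K) N
  have key : (d2 + N + 1) * (d2 + N + 2) * (d2 + N + 3) + (d1 + N + 1) * (d1 + N + 2) * (d1 + N + 3) + 6 * (n * E)
      ≤ (d1 + d2 + N + 1) * (d1 + d2 + N + 2) * (d1 + d2 + N + 3) + (N + 1) * (N + 2) * (N + 3) := by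
    rw [← e1, ← e2, ← e3, ← e4]; omega
  have key2 : 2 * (n * E) ≤ d1 * d2 * (2 * N + (d1 + d2) + 4) := by nlinarith
  have key3 : n * N ≤ n * E + n * n := by
    have : N ≤ E + n := by omega
    nlinarith
  have key4 : (d1 * d2 + 1) * N ≤ n * N := Nat.mul_le_mul_right _ hcon
  nlinarith

end dims
section lemA
variable {K : Type*} [Field K]

lemma td_mul4 {a b c e : MvPolynomial (Fin 3) K} {d : ℕ} (ha : a.totalDegree ≤ d) (hb : b.totalDegree ≤ d)
    (hc : c.totalDegree ≤ d) (he : e.totalDegree ≤ d) : (a * (b * c * e)).totalDegree ≤ 4 * d := by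
  have h1 := totalDegree_mul a (b * c * e)
  have h2 := totalDegree_mul (b * c) e
  have h3 := totalDegree_mul b c
  omega

lemma td_C_mul {a : MvPolynomial (Fin 3) K} {d : ℕ} (k : K) (ha : a.totalDegree ≤ d) :
    (C k * a).totalDegree ≤ d := by
  have h1 := totalDegree_mul (C k) a
  rw [totalDegree_C] at h1
  omega

lemma td_add {a b : MvPolynomial (Fin 3) K} {d : ℕ} (ha : a.totalDegree ≤ d) (hb : b.totalDegree ≤ d) :
    (a + b).totalDegree ≤ d := (totalDegree_add _ _).trans (max_le ha hb)

lemma td_sub {a b : MvPolynomial (Fin 3) K} {d : ℕ} (ha : a.totalDegree ≤ d) (hb : b.totalDegree ≤ d) :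
    (a - b).totalDegree ≤ d := (totalDegree_sub _ _).trans (max_le ha hb)

lemma td_AB (P : MvPolynomial (Fin 3) K) :
    (polyA P).totalDegree ≤ 4 * P.totalDegree ∧ (polyB P).totalDegree ≤ 4 * P.totalDegree := by
  have h1 : ∀ i, (pderiv i P).totalDegree ≤ P.totalDegree := fun i =>
    (totalDegree_pderiv_le i P).trans (Nat.sub_le _ _)
  have h2 : ∀ i j, (pderiv i (pderiv j P)).totalDegree ≤ P.totalDegree := fun i j =>
    ((totalDegree_pderiv_le i _).trans (Nat.sub_le _ _)).trans (h1 j)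
  have m := fun i j k l n => td_mul4 (h2 i j) (h1 k) (h1 l) (h1 n)
  constructor
  · have e : polyA P = pderiv 0 (pderiv 0 P) * (pderiv 2 P * pderiv 2 P * pderiv 2 P)
      - (pderiv 1 (pderiv 1 P) * (pderiv 2 P * pderiv 2 P * pderiv 0 P)
        + C 2 * (pderiv 0 (pderiv 2 P) * (pderiv 2 P * pderiv 2 P * pderiv 0 P)))
      + C 2 * (pderiv 1 (pderiv 2 P) * (pderiv 2 P * pderiv 0 P * pderiv 1 P))
      - (pderiv 2 (pderiv 2 P) * (pderiv 0 P * pderiv 1 P * pderiv 1 P)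
       - pderiv 2 (pderiv 2 P) * (pderiv 0 P * pderiv 0 P * pderiv 2 P)) := by
      rw [polyA, show (C 2 : MvPolynomial (Fin 3) K) = 2 from rfl]; ring
    rw [e]
    exact td_sub (td_add (td_sub (m _ _ _ _ _) (td_add (m _ _ _ _ _) (td_C_mul _ (m _ _ _ _ _))))
      (td_C_mul _ (m _ _ _ _ _))) (td_sub (m _ _ _ _ _) (m _ _ _ _ _))
  · have e : polyB P = C (-2) * (pderiv 0 (pderiv 1 P) * (pderiv 2 P * pderiv 2 P * pderiv 2 P))
      + (pderiv 1 (pderiv 1 P) * (pderiv 2 P * pderiv 2 P * pderiv 1 P)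
        + C 2 * (pderiv 0 (pderiv 2 P) * (pderiv 2 P * pderiv 2 P * pderiv 1 P)))
      - C 2 * (pderiv 1 (pderiv 2 P) * (pderiv 2 P * pderiv 1 P * pderiv 1 P)
         - pderiv 1 (pderiv 2 P) * (pderiv 2 P * pderiv 0 P * pderiv 2 P))
      + (pderiv 2 (pderiv 2 P) * (pderiv 1 P * pderiv 1 P * pderiv 1 P)
       - C 2 * (pderiv 2 (pderiv 2 P) * (pderiv 0 P * pderiv 1 P * pderiv 2 P))) := by
      rw [polyB, C_neg, show (C 2 : MvPolynomial (Fin 3) K) = 2 from rfl]; ring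
    rw [e]
    exact td_add (td_sub (td_add (td_C_mul _ (m _ _ _ _ _)) (td_add (m _ _ _ _ _) (td_C_mul _ (m _ _ _ _ _))))
      (td_C_mul _ (td_sub (m _ _ _ _ _) (m _ _ _ _ _)))) (td_sub (m _ _ _ _ _) (td_C_mul _ (m _ _ _ _ _)))

lemma td_pos_of_prime (P : MvPolynomial (Fin 3) K) (hP : Prime P) : P.totalDegree ≠ 0 := by
  intro h
  rw [totalDegree_eq_zero_iff_eq_C] at h
  apply hP.not_unit
  rw [h]
  refine IsUnit.map C (isUnit_iff_ne_zero.mpr ?_)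
  intro h0
  rw [h0] at h
  exact hP.ne_zero (by simpa using h)

open Classical in
lemma lemA (p : ℕ) [CharP K p] (P : MvPolynomial (Fin 3) K) (hP : Prime P) (hd : 2 * P.totalDegree + 1 < p)
    (𝒜 ℬ : Finset (K × K × K)) (hA : ∀ r ∈ 𝒜, ∀ r' ∈ 𝒜, Meet r r' → r = r')
    (hne : ∀ r ∈ 𝒜, ∀ q ∈ ℬ, r.1 ≠ q.1) (k : ℕ)
    (hk : ∀ q ∈ ℬ, ∀ κ c : K,
      (𝒜.filter fun r => Meet r q ∧ κ * (q.2.1 - r.2.1) + c * (q.1 - r.1) = 1).card ≤ k)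
    (hv : ∀ r ∈ 𝒜, res r P = 0) :
    ∃ bad ⊆ ℬ, bad.card ≤ 6 * P.totalDegree ^ 2 ∧ ∀ q ∈ ℬ, q ∉ bad →
      (𝒜.filter fun r => Meet r q).card ≤ 6 * P.totalDegree + (if res q P = 0 then k else 0) := by
  set d := P.totalDegree with hdd
  have hd0 : d ≠ 0 := td_pos_of_prime P hP
  obtain ⟨i, hi⟩ : ∃ i, pderiv i P ≠ 0 := by
    by_contra hcon
    push Not at hcon
    exact hd0 (eq_C_of_pderiv_eq_zero p P (by omega) hcon)
  have hPi : ¬ P ∣ pderiv i P := by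
    rintro ⟨T, hT⟩
    have hT0 : T ≠ 0 := by rintro rfl; exact hi (by simpa using hT)
    have h1 := totalDegree_mul_of_isDomain hP.ne_zero hT0
    have h2 := totalDegree_pderiv_le i P
    rw [hT] at h2
    omega
  have hdi : (pderiv i P).totalDegree ≤ d := (totalDegree_pderiv_le i P).trans (Nat.sub_le _ _)
  set bad1 := ℬ.filter (fun q => res q P = 0 ∧ res q (pderiv i P) = 0) with hb1
  have hbad1 : bad1.card ≤ d * d := by
    refine (bezout P _ hP hPi bad1 ?_ ?_).trans (Nat.mul_le_mul le_rfl hdi)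
    · intro q hq; exact (Finset.mem_filter.mp hq).2.1
    · intro q hq; exact (Finset.mem_filter.mp hq).2.2
  -- singular meets
  have hsing : ∀ q ∈ ℬ, q ∉ bad1 → res q P = 0 →
      (𝒜.filter fun r => ∃ u, pt r u = pt q u ∧ (res q (pderiv i P)).eval u = 0).card ≤ d := by
    intro q hq hqb hq0
    have hne0 : res q (pderiv i P) ≠ 0 := fun h => hqb (Finset.mem_filter.mpr ⟨hq, hq0, h⟩)
    refine (card_meet_le _ ?_ q _ hne0 ?_).trans ((natDegree_res _ _).trans hdi)
    · intro r hr r' hr'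
      exact hA r (Finset.mem_filter.mp hr).1 r' (Finset.mem_filter.mp hr').1
    · intro r hr; exact (Finset.mem_filter.mp hr).2
  have hnon : ∀ q ∈ ℬ, res q P ≠ 0 → (𝒜.filter fun r => Meet r q).card ≤ d := by
    intro q hq hq0
    refine (card_meet_le _ ?_ q _ hq0 ?_).trans (natDegree_res _ _)
    · intro r hr r' hr'
      exact hA r (Finset.mem_filter.mp hr).1 r' (Finset.mem_filter.mp hr').1
    · intro r hr
      obtain ⟨hr1, u, hu⟩ := Finset.mem_filter.mp hr
      refine ⟨u, hu, ?_⟩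
      rw [eval_res, ← hu, ← eval_res, hv r hr1]; simp
  have hsplit : ∀ q, (𝒜.filter fun r => Meet r q).card ≤
      (𝒜.filter fun r => ∃ u, pt r u = pt q u ∧ (res q (pderiv i P)).eval u = 0).card +
      (𝒜.filter fun r => ∃ u, pt r u = pt q u ∧ (res q (pderiv i P)).eval u ≠ 0).card := by
    intro q
    refine le_trans (Finset.card_le_card ?_) (Finset.card_union_le _ _)
    intro r hr
    obtain ⟨hr1, u, hu⟩ := Finset.mem_filter.mp hr
    rw [Finset.mem_union, Finset.mem_filter, Finset.mem_filter]
    by_cases h : (res q (pderiv i P)).eval u = 0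
    · exact Or.inl ⟨hr1, u, hu, h⟩
    · exact Or.inr ⟨hr1, u, hu, h⟩
  by_cases hdiv : P ∣ polyA P ∧ P ∣ polyB P
  · refine ⟨bad1, Finset.filter_subset _ _, by nlinarith, ?_⟩
    intro q hq hqb
    by_cases hq0 : res q P = 0
    swap
    · have := hnon q hq hq0; omega
    rw [if_pos hq0]
    have h1 := hsing q hq hqb hq0
    have h2 := hsplit q
    suffices h3 : (𝒜.filter fun r => ∃ u, pt r u = pt q u ∧ (res q (pderiv i P)).eval u ≠ 0).card ≤ k by omega
    have key : ∀ r ∈ 𝒜, ∀ u, pt r u = pt q u → (res q (pderiv i P)).eval u ≠ 0 →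
        (res q (pderiv 2 P)).eval u ≠ 0 ∧
        (res q (D1 q.1 P)).eval u = (res q (pderiv 2 P)).eval u * (r.1 - q.1) := by
      intro r hr u hu hnz
      have a1 := congrArg (Polynomial.eval u) (res_D0_eq_zero r P (hv r hr))
      have a2 := congrArg (Polynomial.eval u) (res_D0_eq_zero q P hq0)
      rw [eval_res, hu] at a1
      rw [eval_res] at a2
      rw [eval_res] at hnz
      rw [eval_res, eval_res]
      simp only [D0, map_add, map_sub, map_mul, eval_C, Polynomial.eval_zero] at a1 a2
      simp only [D1, map_sub, map_mul, eval_C]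
      set P0 := MvPolynomial.eval (pt q u) (pderiv 0 P)
      set P1 := MvPolynomial.eval (pt q u) (pderiv 1 P)
      set P2 := MvPolynomial.eval (pt q u) (pderiv 2 P)
      have hxx : r.1 - q.1 ≠ 0 := sub_ne_zero.mpr (hne r hr q hq)
      have hP1 : P1 = P2 * (r.1 + q.1) := by
        apply mul_left_cancel₀ hxx
        linear_combination a2 - a1
      refine ⟨?_, by rw [hP1]; ring⟩
      intro z2
      apply hnz
      have z1 : P1 = 0 := by rw [hP1, z2]; ring
      have z0 : P0 = 0 := by rw [z1, z2] at a2; simpa using a2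
      have zall : ∀ j : Fin 3, MvPolynomial.eval (pt q u) (pderiv j P) = 0 := by
        intro j
        fin_cases j
        · exact z0
        · exact z1
        · exact z2
      exact zall i
    rcases Finset.eq_empty_or_nonempty (𝒜.filter fun r => ∃ u, pt r u = pt q u ∧ (res q (pderiv i P)).eval u ≠ 0) with he | ⟨r0, hr0⟩
    · rw [he]; simp
    obtain ⟨hr0A, u0, hu0, hn0⟩ := Finset.mem_filter.mp hr0
    obtain ⟨g1, g2⟩ := key r0 hr0A u0 hu0 hn0
    obtain ⟨κ, c, hκ⟩ := case3 p q P hd hq0 hdiv.1 hdiv.2 (by intro h; rw [h] at g1; simp at g1) (by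
      intro h
      rw [h, Polynomial.eval_zero] at g2
      exact mul_ne_zero g1 (sub_ne_zero.mpr (hne r0 hr0A q hq)) g2.symm)
    refine le_trans (Finset.card_le_card ?_) (hk q hq κ c)
    intro r hr
    obtain ⟨hrA, u, hu, hn⟩ := Finset.mem_filter.mp hr
    obtain ⟨f1, f2⟩ := key r hrA u hu hn
    refine Finset.mem_filter.mpr ⟨hrA, ⟨u, hu⟩, ?_⟩
    have e1 := congrArg (Polynomial.eval u) hκ
    simp only [Polynomial.eval_neg, Polynomial.eval_mul, Polynomial.eval_add, Polynomial.eval_C, Polynomial.eval_X, f2] at e1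
    have e2 : r.2.1 - r.1 * u = q.2.1 - q.1 * u := congrFun hu 1
    have e3 : (κ * u + c) * (q.1 - r.1) = 1 := by
      apply mul_left_cancel₀ f1
      linear_combination e1
    linear_combination e3 - κ * e2
  · obtain ⟨e, he1, he2, he3⟩ : ∃ e : MvPolynomial (Fin 3) K, ¬ P ∣ e ∧ e.totalDegree ≤ 4 * d ∧
        ∀ r ∈ 𝒜, ∀ q ∈ ℬ, res q P = 0 → ∀ u, pt r u = pt q u → (res q e).eval u = 0 := by
      by_cases h : P ∣ polyA P
      · exact ⟨polyB P, fun h' => hdiv ⟨h, h'⟩, (td_AB P).2, fun r hr q hq h0 u hu =>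
          (ab_zero r q P (hv r hr) h0 u hu (hne r hr q hq)).2⟩
      · exact ⟨polyA P, h, (td_AB P).1, fun r hr q hq h0 u hu =>
          (ab_zero r q P (hv r hr) h0 u hu (hne r hr q hq)).1⟩
    set bad2 := ℬ.filter (fun q => res q P = 0 ∧ res q e = 0) with hb2
    have hbad2 : bad2.card ≤ d * (4 * d) := by
      refine (bezout P _ hP he1 bad2 ?_ ?_).trans (Nat.mul_le_mul le_rfl he2)
      · intro q hq; exact (Finset.mem_filter.mp hq).2.1
      · intro q hq; exact (Finset.mem_filter.mp hq).2.2
    refine ⟨bad2, Finset.filter_subset _ _, by nlinarith, ?_⟩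
    intro q hq hqb
    by_cases hq0 : res q P = 0
    swap
    · have := hnon q hq hq0; omega
    have hne0 : res q e ≠ 0 := fun h => hqb (Finset.mem_filter.mpr ⟨hq, hq0, h⟩)
    have : (𝒜.filter fun r => Meet r q).card ≤ 4 * d := by
      refine (card_meet_le _ ?_ q _ hne0 ?_).trans ((natDegree_res _ _).trans he2)
      · intro r hr r' hr'
        exact hA r (Finset.mem_filter.mp hr).1 r' (Finset.mem_filter.mp hr').1
      · intro r hr
        obtain ⟨hr1, u, hu⟩ := Finset.mem_filter.mp hr
        exact ⟨u, hu, he3 r hr1 q hq hq0 u hu⟩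
    omega

open Classical in
lemma lemA' (p : ℕ) [CharP K p] (P : MvPolynomial (Fin 3) K) (hP : P ≠ 0) :
    2 * P.totalDegree + 1 < p →
    ∀ (𝒜 ℬ : Finset (K × K × K)), (∀ r ∈ 𝒜, ∀ r' ∈ 𝒜, Meet r r' → r = r') →
    (∀ r ∈ 𝒜, ∀ q ∈ ℬ, r.1 ≠ q.1) → ∀ k : ℕ,
    (∀ q ∈ ℬ, ∀ κ c : K,
      (𝒜.filter fun r => Meet r q ∧ κ * (q.2.1 - r.2.1) + c * (q.1 - r.1) = 1).card ≤ k) →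
    (∀ r ∈ 𝒜, res r P = 0) →
    ∃ bad ⊆ ℬ, bad.card ≤ 6 * P.totalDegree ^ 2 ∧ ∀ q ∈ ℬ, q ∉ bad →
      (𝒜.filter fun r => Meet r q).card ≤ 6 * P.totalDegree + (if res q P = 0 then k else 0) := by
  induction P using UniqueFactorizationMonoid.induction_on_prime with
  | h₁ => exact absurd rfl hP
  | h₂ x hx =>
    intro hd 𝒜 ℬ hA hne k hk hv
    have : 𝒜 = ∅ := by
      rw [Finset.eq_empty_iff_forall_notMem]
      intro r hr
      have h1 := hx.map (res r)
      rw [hv r hr] at h1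
      simp at h1
    refine ⟨∅, by simp, by simp, ?_⟩
    intro q _ _
    simp [this]
  | h₃ a π ha hπ ih =>
    intro hd 𝒜 ℬ hA hne k hk hv
    have htd := totalDegree_mul_of_isDomain hπ.ne_zero ha
    set d1 := π.totalDegree with hd1
    set d2 := a.totalDegree with hd2
    rw [htd] at hd ⊢
    by_cases hdv : π ∣ a
    · obtain ⟨bad, hb1, hb2, hb3⟩ := ih ha (by omega) 𝒜 ℬ hA hne k hk (by
        intro r hr
        have h1 := hv r hr
        rw [map_mul] at h1
        rcases mul_eq_zero.mp h1 with h | h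
        · obtain ⟨t, ht⟩ := hdv
          rw [ht, map_mul, h, zero_mul]
        · exact h)
      refine ⟨bad, hb1, by nlinarith, ?_⟩
      intro q hq hqb
      have := hb3 q hq hqb
      by_cases h0 : res q a = 0
      · rw [if_pos h0] at this
        rw [if_pos (by rw [map_mul, h0, mul_zero])]
        omega
      · rw [if_neg h0] at this
        omega
    · have hk' : ∀ 𝒜' ⊆ 𝒜, ∀ q ∈ ℬ, ∀ κ c : K,
        (𝒜'.filter fun r => Meet r q ∧ κ * (q.2.1 - r.2.1) + c * (q.1 - r.1) = 1).card ≤ k := by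
        intro 𝒜' hs q hq κ c
        exact (Finset.card_le_card (Finset.filter_subset_filter _ hs)).trans (hk q hq κ c)
      set 𝒜1 := 𝒜.filter (fun r => res r π = 0) with h𝒜1
      set 𝒜2 := 𝒜.filter (fun r => ¬ res r π = 0) with h𝒜2
      have s1 : 𝒜1 ⊆ 𝒜 := Finset.filter_subset _ _
      have s2 : 𝒜2 ⊆ 𝒜 := Finset.filter_subset _ _
      obtain ⟨bad1, ha1, ha2, ha3⟩ := lemA p π hπ (by omega) 𝒜1 ℬ
        (fun r hr r' hr' => hA r (s1 hr) r' (s1 hr')) (fun r hr => hne r (s1 hr)) k (hk' _ s1)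
        (fun r hr => (Finset.mem_filter.mp hr).2)
      obtain ⟨bad2, hb1, hb2, hb3⟩ := ih ha (by omega) 𝒜2 ℬ
        (fun r hr r' hr' => hA r (s2 hr) r' (s2 hr')) (fun r hr => hne r (s2 hr)) k (hk' _ s2)
        (fun r hr => by
          have h1 := hv r (s2 hr)
          rw [map_mul] at h1
          exact (mul_eq_zero.mp h1).resolve_left (Finset.mem_filter.mp hr).2)
      set bad3 := ℬ.filter (fun q => res q π = 0 ∧ res q a = 0) with hb3d
      have hbad3 : bad3.card ≤ d1 * d2 := by
        refine bezout π _ hπ hdv bad3 ?_ ?_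
        · intro q hq; exact (Finset.mem_filter.mp hq).2.1
        · intro q hq; exact (Finset.mem_filter.mp hq).2.2
      refine ⟨bad1 ∪ bad2 ∪ bad3, Finset.union_subset (Finset.union_subset ha1 hb1) (Finset.filter_subset _ _), ?_, ?_⟩
      · have c1 := Finset.card_union_le (bad1 ∪ bad2) bad3
        have c2 := Finset.card_union_le bad1 bad2
        nlinarith [Nat.zero_le (d1 * d2)]
      · intro q hq hqb
        simp only [Finset.mem_union, not_or] at hqb
        obtain ⟨⟨n1, n2⟩, n3⟩ := hqb
        have e1 := ha3 q hq n1
        have e2 := hb3 q hq n2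
        have e3 : (𝒜.filter fun r => Meet r q).card ≤ (𝒜1.filter fun r => Meet r q).card + (𝒜2.filter fun r => Meet r q).card := by
          refine le_trans (Finset.card_le_card ?_) (Finset.card_union_le _ _)
          intro r hr
          obtain ⟨hr1, hr2⟩ := Finset.mem_filter.mp hr
          rw [Finset.mem_union, Finset.mem_filter, Finset.mem_filter, Finset.mem_filter, Finset.mem_filter]
          by_cases h : res r π = 0
          · exact Or.inl ⟨⟨hr1, h⟩, hr2⟩
          · exact Or.inr ⟨⟨hr1, h⟩, hr2⟩
        have e4 : ¬ (res q π = 0 ∧ res q a = 0) := fun h => n3 (Finset.mem_filter.mpr ⟨hq, h⟩)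
        rw [map_mul]
        by_cases h1 : res q π = 0
        · have h2 : res q a ≠ 0 := fun h => e4 ⟨h1, h⟩
          rw [if_pos h1] at e1
          rw [if_neg h2] at e2
          rw [if_pos (by rw [h1, zero_mul])]
          omega
        · rw [if_neg h1] at e1
          by_cases h2 : res q a = 0
          · rw [if_pos h2] at e2
            rw [if_pos (by rw [h2, mul_zero])]
            omega
          · rw [if_neg h2] at e2
            omega

end lemA
section sampling

lemma samp {α ι : Type*} [DecidableEq α] (Q : Finset ι) (S : ι → Finset α) (ρ : ℝ) (h0 : 0 ≤ ρ) (h1 : ρ ≤ 1)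
    (v : ℝ) (A : Finset α) : ∀ x : ι → ℝ, ∃ T ⊆ A,
    ∑ q ∈ Q, (((T ∩ S q).card : ℝ) - x q) ^ 2 + v * (T.card : ℝ) ≤
    ∑ q ∈ Q, ((ρ * ((A ∩ S q).card : ℝ) - x q) ^ 2 + ρ * (1 - ρ) * ((A ∩ S q).card : ℝ)) + v * ρ * (A.card : ℝ) := by
  induction A using Finset.induction_on with
  | empty => intro x; exact ⟨∅, by simp, by simp⟩
  | insert a A ha ih =>
    intro x
    obtain ⟨T1, hT1, h1'⟩ := ih x
    obtain ⟨T2, hT2, h2'⟩ := ih (fun q => x q - (if a ∈ S q then 1 else 0))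
    have haT2 : a ∉ T2 := fun h => ha (hT2 h)
    have hc : ∀ T : Finset α, a ∉ T → ∀ q, ((insert a T ∩ S q).card : ℝ) = ((T ∩ S q).card : ℝ) + (if a ∈ S q then 1 else 0) := by
      intro T hT q
      by_cases h : a ∈ S q
      · rw [Finset.insert_inter_of_mem h, Finset.card_insert_of_notMem (by simp [hT]), if_pos h]; push_cast; ring
      · rw [Finset.insert_inter_of_notMem h, if_neg h]; ring
    set target := ∑ q ∈ Q, ((ρ * ((insert a A ∩ S q).card : ℝ) - x q) ^ 2 + ρ * (1 - ρ) * ((insert a A ∩ S q).card : ℝ)) + v * ρ * ((insert a A).card : ℝ) with htar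
    have key : target = ρ * ((∑ q ∈ Q, ((ρ * ((A ∩ S q).card : ℝ) - (x q - (if a ∈ S q then 1 else 0))) ^ 2 + ρ * (1 - ρ) * ((A ∩ S q).card : ℝ)) + v * ρ * (A.card : ℝ)) + v)
        + (1 - ρ) * (∑ q ∈ Q, ((ρ * ((A ∩ S q).card : ℝ) - x q) ^ 2 + ρ * (1 - ρ) * ((A ∩ S q).card : ℝ)) + v * ρ * (A.card : ℝ)) := by
      rw [htar, Finset.card_insert_of_notMem ha]
      have : ∑ q ∈ Q, ((ρ * ((insert a A ∩ S q).card : ℝ) - x q) ^ 2 + ρ * (1 - ρ) * ((insert a A ∩ S q).card : ℝ))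
        = ρ * (∑ q ∈ Q, ((ρ * ((A ∩ S q).card : ℝ) - (x q - (if a ∈ S q then 1 else 0))) ^ 2 + ρ * (1 - ρ) * ((A ∩ S q).card : ℝ))) + (1 - ρ) * (∑ q ∈ Q, ((ρ * ((A ∩ S q).card : ℝ) - x q) ^ 2 + ρ * (1 - ρ) * ((A ∩ S q).card : ℝ))) := by
        rw [Finset.mul_sum, Finset.mul_sum, ← Finset.sum_add_distrib]
        refine Finset.sum_congr rfl fun q _ => ?_
        rw [hc A ha q]
        split_ifs <;> ring
      rw [this]; push_cast; ring
    by_cases hcase : ∑ q ∈ Q, (((T1 ∩ S q).card : ℝ) - x q) ^ 2 + v * (T1.card : ℝ) ≤ target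
    · exact ⟨T1, hT1.trans (Finset.subset_insert _ _), hcase⟩
    · refine ⟨insert a T2, Finset.insert_subset_insert _ hT2, ?_⟩
      push Not at hcase
      rw [Finset.card_insert_of_notMem haT2]
      have e : ∑ q ∈ Q, (((insert a T2 ∩ S q).card : ℝ) - x q) ^ 2 = ∑ q ∈ Q, (((T2 ∩ S q).card : ℝ) - (x q - (if a ∈ S q then 1 else 0))) ^ 2 := by
        refine Finset.sum_congr rfl fun q _ => ?_
        rw [hc T2 haT2 q]; ring
      rw [e]
      push_cast
      by_contra hcon
      push Not at hcon
      rcases h0.lt_or_eq with hρ | hρ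
      · nlinarith
      · rw [← hρ] at key h1'
        linarith

end sampling

section incid
variable {K : Type*} [Field K]

open Classical in
def OneSide (k : ℕ) (𝒜 ℬ : Finset (K × K × K)) : Prop :=
  (∀ r ∈ 𝒜, ∀ r' ∈ 𝒜, Meet r r' → r = r') ∧
    (∀ r ∈ 𝒜, ∀ q ∈ ℬ, r.1 ≠ q.1) ∧
    (∀ q ∈ ℬ, ∀ κ c : K,
      (𝒜.filter fun r => Meet r q ∧ κ * (q.2.1 - r.2.1) + c * (q.1 - r.1) = 1).card ≤ k)

open Classical in
lemma OneSide.mono {k : ℕ} {𝒜 ℬ 𝒜' ℬ' : Finset (K × K × K)} (h : OneSide k 𝒜 ℬ) (hA : 𝒜' ⊆ 𝒜) (hB : ℬ' ⊆ ℬ) :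
    OneSide k 𝒜' ℬ' :=
  ⟨fun r hr r' hr' => h.1 r (hA hr) r' (hA hr'), fun r hr q hq => h.2.1 r (hA hr) q (hB hq),
    fun q hq κ c => (Finset.card_le_card (Finset.filter_subset_filter _ hA)).trans (h.2.2 q (hB hq) κ c)⟩

set_option maxHeartbeats 800000 in
open Classical in
lemma core (p : ℕ) [CharP K p] (hp : 2 ≤ p) (k N : ℕ) (hN : N ≤ p ^ 2) (𝒜 ℬ : Finset (K × K × K))
    (h : OneSide k 𝒜 ℬ) (hAN : 𝒜.card ≤ N) (hAB : 𝒜.card ≤ ℬ.card) (hB : ℬ.Nonempty) :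
    ∃ q ∈ ℬ, (𝒜.filter fun r => Meet r q).card < 10000 * (Nat.sqrt N + k + 1) := by
  by_contra hcon
  push Not at hcon
  obtain ⟨D, hD⟩ : ∃ D, D = 10000 * (Nat.sqrt N + k + 1) := ⟨_, rfl⟩
  rw [← hD] at hcon
  have := fun q hq => Finset.exists_subset_card_eq (hcon q hq)
  choose! S hS1 hS2 using this
  have hD1 : (10000:ℝ) ≤ D := by rw [hD]; push_cast; nlinarith [Nat.cast_nonneg (α := ℝ) (Nat.sqrt N), Nat.cast_nonneg (α := ℝ) k]
  have hn1 : 1 ≤ 𝒜.card := by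
    obtain ⟨q, hq⟩ := hB
    have h1 := hcon q hq
    have h2 := Finset.card_le_card (Finset.filter_subset (fun r => Meet r q) 𝒜)
    omega
  have hn : (1:ℝ) ≤ 𝒜.card := by exact_mod_cast hn1
  have hnb : (𝒜.card : ℝ) ≤ ℬ.card := by exact_mod_cast hAB
  set n : ℝ := (𝒜.card : ℝ) with hnd
  set nb : ℝ := (ℬ.card : ℝ) with hnbd
  obtain ⟨T, hT, hTs⟩ := samp ℬ S (1/200) (by norm_num) (by norm_num) (nb * D / n) 𝒜 (fun _ => (D:ℝ)/200)
  have hSA : ∀ q ∈ ℬ, (((𝒜 ∩ S q).card : ℕ) : ℝ) = D := by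
    intro q hq
    rw [Finset.inter_eq_right.mpr ((hS1 q hq).trans (Finset.filter_subset _ _)), hS2 q hq]
  have hRHS : ∑ q ∈ ℬ, ((1/200 * (((𝒜 ∩ S q).card : ℕ) : ℝ) - (D:ℝ)/200) ^ 2 + 1/200 * (1 - 1/200) * (((𝒜 ∩ S q).card : ℕ) : ℝ)) = nb * (1/200 * (1 - 1/200) * D) := by
    rw [Finset.sum_congr rfl (g := fun _ => (1/200 * (1 - 1/200) * D : ℝ))]
    · rw [Finset.sum_const, nsmul_eq_mul]
    · intro q hq
      rw [hSA q hq]; ring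
  rw [hRHS] at hTs
  have hv : nb * D / n * (1/200) * n = nb * D / 200 := by field_simp
  rw [← hnd, hv] at hTs
  have hnn : 0 ≤ ∑ q ∈ ℬ, (((T ∩ S q).card : ℝ) - (D:ℝ)/200) ^ 2 := Finset.sum_nonneg fun _ _ => sq_nonneg _
  have hTn : (T.card : ℝ) ≤ n / 100 := by
    have h1 : nb * D / n * (T.card : ℝ) ≤ nb * D / n * (n / 100) := by
      have : nb * D / n * (n / 100) = nb * D / 100 := by field_simp
      rw [this]
      have : 0 ≤ nb * D := by positivity
      nlinarith
    exact le_of_mul_le_mul_left h1 (by positivity)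
  have hsum : ∑ q ∈ ℬ, (((T ∩ S q).card : ℝ) - (D:ℝ)/200) ^ 2 ≤ nb * D / 100 := by
    have : 0 ≤ nb * D / n * (T.card : ℝ) := by positivity
    have : 0 ≤ nb * D := by positivity
    nlinarith
  -- polynomial
  obtain ⟨d, hd⟩ : ∃ d, d = Nat.sqrt (6 * T.card) := ⟨_, rfl⟩
  have hd1 : d * d ≤ 6 * T.card := by rw [hd]; exact Nat.sqrt_le _
  have hd2 : 6 * T.card < (d + 1) * (d + 1) := by rw [hd]; exact Nat.lt_succ_sqrt _
  obtain ⟨P, hP0, hPd, hPv⟩ := siegel T d (hd2.trans_le (Nat.mul_le_mul (by omega) (by omega)))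
  have hT100 : 100 * T.card ≤ 𝒜.card := by
    have : (100:ℝ) * T.card ≤ 𝒜.card := by linarith
    exact_mod_cast this
  have h16 : (4 * d) * (4 * d) ≤ N := by
    have : (4 * d) * (4 * d) = 16 * (d * d) := by ring
    omega
  have h4d : 4 * d ≤ Nat.sqrt N := Nat.le_sqrt.mpr h16
  have h4p : 4 * d ≤ p := by
    by_contra hc
    push Not at hc
    have : p * p < (4 * d) * (4 * d) := Nat.mul_lt_mul'' hc hc
    rw [sq] at hN
    omega
  obtain ⟨bad, hb1, hb2, hb3⟩ := lemA' p P hP0 (by omega) T ℬ (h.mono hT subset_rfl).1 (h.mono hT subset_rfl).2.1 k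
    (h.mono hT subset_rfl).2.2 hPv
  have hbadc : (bad.card : ℝ) ≤ nb / 2 := by
    have h1 : P.totalDegree ^ 2 ≤ d * d := by rw [sq]; exact Nat.mul_le_mul hPd hPd
    have h2 : 2 * bad.card ≤ ℬ.card := by omega
    have : (2:ℝ) * bad.card ≤ ℬ.card := by exact_mod_cast h2
    linarith
  have hlow : nb / 2 * ((D:ℝ)/400)^2 ≤ ∑ q ∈ ℬ, (((T ∩ S q).card : ℝ) - (D:ℝ)/200) ^ 2 := by
    calc nb / 2 * ((D:ℝ)/400)^2 ≤ ((ℬ \ bad).card : ℝ) * ((D:ℝ)/400)^2 := by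
          gcongr
          rw [Finset.cast_card_sdiff hb1]; linarith
      _ = ∑ q ∈ ℬ \ bad, ((D:ℝ)/400)^2 := by rw [Finset.sum_const, nsmul_eq_mul]
      _ ≤ ∑ q ∈ ℬ \ bad, (((T ∩ S q).card : ℝ) - (D:ℝ)/200) ^ 2 := by
          refine Finset.sum_le_sum fun q hq => ?_
          obtain ⟨hq1, hq2⟩ := Finset.mem_sdiff.mp hq
          have g1 := hb3 q hq1 hq2
          have g2 : (T ∩ S q).card ≤ (T.filter fun r => Meet r q).card := by
            refine Finset.card_le_card fun r hr => ?_
            obtain ⟨a1, a2⟩ := Finset.mem_inter.mp hr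
            exact Finset.mem_filter.mpr ⟨a1, (Finset.mem_filter.mp (hS1 q hq1 a2)).2⟩
          have g3 : 400 * (T ∩ S q).card ≤ D := by
            have : (T ∩ S q).card ≤ 6 * P.totalDegree + k := by
              split_ifs at g1 <;> omega
            omega
          have g4 : (400:ℝ) * (T ∩ S q).card ≤ D := by exact_mod_cast g3
          have : ((D:ℝ)/400) ≤ (D:ℝ)/200 - ((T ∩ S q).card : ℝ) := by linarith
          have h0 : 0 ≤ (D:ℝ)/400 := by positivity
          nlinarith
      _ ≤ _ := Finset.sum_le_sum_of_subset_of_nonneg Finset.sdiff_subset fun _ _ _ => sq_nonneg _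
  have hnb0 : 0 < nb := by linarith
  have : nb * (D / 2 * (D/160000)) ≤ nb * (D / 100) := by
    calc nb * (D / 2 * (D/160000)) = nb / 2 * ((D:ℝ)/400)^2 := by ring
      _ ≤ nb * D / 100 := hlow.trans hsum
      _ = _ := by ring
  have := le_of_mul_le_mul_left this hnb0
  nlinarith

open Classical in
lemma inc_swap (𝒜 ℬ : Finset (K × K × K)) :
    ∑ q ∈ ℬ, (𝒜.filter fun r => Meet r q).card = ∑ r ∈ 𝒜, (ℬ.filter fun q => Meet q r).card := by
  simp only [Finset.card_eq_sum_ones]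
  apply Finset.sum_comm'
  intro q r
  simp only [Finset.mem_filter]
  exact ⟨fun h => ⟨⟨h.1, h.2.2.symm⟩, h.2.1⟩, fun h => ⟨h.1.1, h.2, h.1.2.symm⟩⟩

open Classical in
theorem incid (p : ℕ) [CharP K p] (hp : 2 ≤ p) (k N : ℕ) (hN : N ≤ p ^ 2) (n : ℕ) :
    ∀ 𝒜 ℬ : Finset (K × K × K), 𝒜.card + ℬ.card = n →
    OneSide k 𝒜 ℬ → OneSide k ℬ 𝒜 → 𝒜.card ≤ N → ℬ.card ≤ N →
    ∑ q ∈ ℬ, (𝒜.filter fun r => Meet r q).card ≤ 10000 * (Nat.sqrt N + k + 1) * n := by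
  induction n with
  | zero =>
    intro 𝒜 ℬ hn _ _ _ _
    have : ℬ = ∅ := Finset.card_eq_zero.mp (by omega)
    simp [this]
  | succ n ih =>
    have step : ∀ 𝒜 ℬ : Finset (K × K × K), 𝒜.card + ℬ.card = n + 1 →
      OneSide k 𝒜 ℬ → OneSide k ℬ 𝒜 → 𝒜.card ≤ N → ℬ.card ≤ N → 𝒜.card ≤ ℬ.card →
      ∑ q ∈ ℬ, (𝒜.filter fun r => Meet r q).card ≤ 10000 * (Nat.sqrt N + k + 1) * (n + 1) := by
      intro 𝒜 ℬ hn h1 h2 hA hB hAB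
      have hBn : ℬ.Nonempty := Finset.card_pos.mp (by omega)
      obtain ⟨q, hq, hdeg⟩ := core p hp k N hN 𝒜 ℬ h1 hA hAB hBn
      have hs := Finset.erase_subset q ℬ
      have hcard := Finset.card_erase_add_one hq
      have := ih 𝒜 (ℬ.erase q) (by omega) (h1.mono subset_rfl hs) (h2.mono hs subset_rfl) hA (by omega)
      rw [← Finset.sum_erase_add _ _ hq]
      rw [mul_add, mul_one]
      omega
    intro 𝒜 ℬ hn h1 h2 hA hB
    rcases le_total 𝒜.card ℬ.card with h | h
    · exact step 𝒜 ℬ hn h1 h2 hA hB h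
    · rw [inc_swap]
      exact step ℬ 𝒜 (by omega) h2 h1 hB hA h

end incid
section energy

lemma Meet.rel {K : Type*} [Field K] {p q : K × K × K} (h : Meet p q) :
    p.2.2 - q.2.2 = q.2.1 * p.1 - p.2.1 * q.1 := by
  obtain ⟨u, hu⟩ := h
  have h1 : p.2.1 - p.1 * u = q.2.1 - q.1 * u := congrFun hu 1
  have h2 : p.2.2 - p.2.1 * p.1 + p.1 ^ 2 * u = q.2.2 - q.2.1 * q.1 + q.1 ^ 2 * u := congrFun hu 2
  linear_combination h2 + (p.1 + q.1) * h1

lemma meet_of_rel {K : Type*} [Field K] {p q : K × K × K} (hne : p.1 ≠ q.1)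
    (h : p.2.2 - q.2.2 = q.2.1 * p.1 - p.2.1 * q.1) : Meet p q := by
  have h0 : p.1 - q.1 ≠ 0 := sub_ne_zero.mpr hne
  obtain ⟨u, hu⟩ : ∃ u, u * (p.1 - q.1) = p.2.1 - q.2.1 := ⟨(p.2.1 - q.2.1) / (p.1 - q.1), by field_simp⟩
  refine ⟨u, ?_⟩
  funext i
  fin_cases i
  · rfl
  · show p.2.1 - p.1 * u = q.2.1 - q.1 * u
    linear_combination -hu
  · show p.2.2 - p.2.1 * p.1 + p.1 ^ 2 * u = q.2.2 - q.2.1 * q.1 + q.1 ^ 2 * u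
    linear_combination h + (p.1 + q.1) * hu

open Classical in
lemma kcond {K : Type*} [Field K] (𝒜 : Finset (K × K × K)) (q : K × K × K) (X1 M1 : Finset K) (k : ℕ)
    (hX : ∀ r ∈ 𝒜, r.1 ∈ X1) (hM : ∀ r ∈ 𝒜, r.2.1 ∈ M1) (hXk : X1.card ≤ k) (hMk : M1.card ≤ k) (κ c : K) :
    (𝒜.filter fun r => Meet r q ∧ κ * (q.2.1 - r.2.1) + c * (q.1 - r.1) = 1).card ≤ k := by
  by_cases hκ : κ = 0
  · refine le_trans (Finset.card_le_card_of_injOn (fun r => r.2.1) ?_ ?_) hMk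
    · intro r hr
      exact hM r (Finset.mem_filter.mp hr).1
    · intro r hr r' hr' he
      obtain ⟨_, h1, h2⟩ := Finset.mem_filter.mp hr
      obtain ⟨_, h1', h2'⟩ := Finset.mem_filter.mp hr'
      replace h1 := h1.rel
      replace h1' := h1'.rel
      simp only at he
      rw [hκ] at h2 h2'
      have hc : c ≠ 0 := by rintro rfl; simp at h2
      have e1 : r.1 = r'.1 := by
        apply mul_left_cancel₀ hc
        linear_combination h2' - h2
      refine Prod.ext e1 (Prod.ext he ?_)
      rw [e1, he] at h1
      linear_combination h1 - h1'
  · refine le_trans (Finset.card_le_card_of_injOn (fun r => r.1) ?_ ?_) hXk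
    · intro r hr
      exact hX r (Finset.mem_filter.mp hr).1
    · intro r hr r' hr' he
      obtain ⟨_, h1, h2⟩ := Finset.mem_filter.mp hr
      obtain ⟨_, h1', h2'⟩ := Finset.mem_filter.mp hr'
      replace h1 := h1.rel
      replace h1' := h1'.rel
      simp only at he
      have e1 : r.2.1 = r'.2.1 := by
        apply mul_left_cancel₀ hκ
        rw [he] at h2
        linear_combination h2' - h2
      refine Prod.ext he (Prod.ext e1 ?_)
      rw [e1, he] at h1
      linear_combination h1 - h1'

lemma indep (p : ℕ) [Fact p.Prime] (a b c : ZMod p)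
    (h : (RatFunc.C a : RatFunc (ZMod p)) + RatFunc.C b * RatFunc.X + RatFunc.C c * RatFunc.X ^ 2 = 0) :
    a = 0 ∧ b = 0 ∧ c = 0 := by
  have h1 : algebraMap (Polynomial (ZMod p)) (RatFunc (ZMod p))
      (Polynomial.C a + Polynomial.C b * Polynomial.X + Polynomial.C c * Polynomial.X ^ 2) = 0 := by
    rw [← h]
    simp [RatFunc.algebraMap_C, RatFunc.algebraMap_X]
  have h2 := (map_eq_zero_iff _ (RatFunc.algebraMap_injective (ZMod p))).mp h1
  have e0 := congrArg (fun f => Polynomial.coeff f 0) h2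
  have e1 := congrArg (fun f => Polynomial.coeff f 1) h2
  have e2 := congrArg (fun f => Polynomial.coeff f 2) h2
  simp [Polynomial.coeff_X, Polynomial.coeff_C, Polynomial.coeff_X_pow] at e0 e1 e2
  exact ⟨e0, e1, e2⟩

open Classical in
lemma energy (p : ℕ) [Fact p.Prime] (S : Finset (ZMod p)) (L : Finset (ZMod p × ZMod p)) (hL : ∀ l ∈ L, l.1 ≠ 0)
    (k : ℕ) (hSk : S.card ≤ k) (hLk : (L.image Prod.fst).card ≤ k) (hN : S.card * L.card ≤ p ^ 2) :
    (((S ×ˢ L) ×ˢ (S ×ˢ L)).filter fun z => z.1.2.1 * z.2.1 + z.1.2.2 = z.2.2.1 * z.1.1 + z.2.2.2).card ≤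
      10000 * (Nat.sqrt (S.card * L.card) + k + 1) * (2 * (S.card * L.card)) := by
  haveI : CharP (RatFunc (ZMod p)) p := charP_of_injective_algebraMap (algebraMap (ZMod p) (RatFunc (ZMod p))).injective p
  set N := S.card * L.card with hNd
  let τ : RatFunc (ZMod p) := RatFunc.X
  have hτ : τ ≠ 0 := RatFunc.X_ne_zero
  let ι : ZMod p →+* RatFunc (ZMod p) := RatFunc.C
  have ind : ∀ a b c : ZMod p, ι a + ι b * τ + ι c * τ ^ 2 = 0 → a = 0 ∧ b = 0 ∧ c = 0 := fun a b c h => indep p a b c h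
  let φ : ZMod p × ZMod p × ZMod p → RatFunc (ZMod p) × RatFunc (ZMod p) × RatFunc (ZMod p) :=
    fun v => (ι v.1 + τ, τ * ι v.2.1, ι v.2.2)
  let ψ : ZMod p × ZMod p × ZMod p → RatFunc (ZMod p) × RatFunc (ZMod p) × RatFunc (ZMod p) :=
    fun v => (ι v.1 / τ, ι v.2.1, ι v.2.2 - τ * ι v.2.1)
  have skφ : ∀ v ∈ S ×ˢ L, ∀ w ∈ S ×ˢ L, Meet (φ v) (φ w) → v = w := by
    intro v hv w hw h
    have h1 : ι v.2.2 - ι w.2.2 = τ * ι w.2.1 * (ι v.1 + τ) - τ * ι v.2.1 * (ι w.1 + τ) := h.rel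
    obtain ⟨a1, a2, a3⟩ := ind (v.2.2 - w.2.2) (v.2.1 * w.1 - w.2.1 * v.1) (v.2.1 - w.2.1) (by
      simp only [map_sub, map_mul]; linear_combination h1)
    have e3 : v.2.1 = w.2.1 := sub_eq_zero.mp a3
    refine Prod.ext ?_ (Prod.ext e3 (sub_eq_zero.mp a1))
    apply mul_left_cancel₀ (hL w.2 (Finset.mem_product.mp hw).2)
    rw [e3] at a2
    linear_combination -a2
  have skψ : ∀ v ∈ S ×ˢ L, ∀ w ∈ S ×ˢ L, Meet (ψ v) (ψ w) → v = w := by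
    intro v hv w hw h
    have h1 : (ι v.2.2 - τ * ι v.2.1) - (ι w.2.2 - τ * ι w.2.1) = ι w.2.1 * (ι v.1 / τ) - ι v.2.1 * (ι w.1 / τ) := h.rel
    have h2 : ((ι v.2.2 - τ * ι v.2.1) - (ι w.2.2 - τ * ι w.2.1)) * τ = ι w.2.1 * ι v.1 - ι v.2.1 * ι w.1 := by
      rw [h1]; field_simp
    obtain ⟨a1, a2, a3⟩ := ind (v.2.1 * w.1 - w.2.1 * v.1) (v.2.2 - w.2.2) (w.2.1 - v.2.1) (by
      simp only [map_sub, map_mul]; linear_combination h2)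
    have e3 : v.2.1 = w.2.1 := (sub_eq_zero.mp a3).symm
    refine Prod.ext ?_ (Prod.ext e3 (sub_eq_zero.mp a2))
    apply mul_left_cancel₀ (hL w.2 (Finset.mem_product.mp hw).2)
    rw [e3] at a1
    linear_combination -a1
  have meet_self : ∀ r : RatFunc (ZMod p) × RatFunc (ZMod p) × RatFunc (ZMod p), Meet r r := fun r => ⟨0, rfl⟩
  have injφ : Set.InjOn φ (S ×ˢ L : Finset _) := fun v hv w hw h => skφ v hv w hw (h ▸ meet_self _)
  have injψ : Set.InjOn ψ (S ×ˢ L : Finset _) := fun v hv w hw h => skψ v hv w hw (h ▸ meet_self _)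
  have hne : ∀ v w, (φ v).1 ≠ (ψ w).1 := by
    intro v w h
    have h1 : ι v.1 + τ = ι w.1 / τ := h
    have h2 : (ι v.1 + τ) * τ = ι w.1 := by rw [h1]; field_simp
    have := ind (-w.1) v.1 1 (by simp only [map_neg, map_one]; linear_combination h2)
    exact one_ne_zero this.2.2
  have hcross : ∀ v w : ZMod p × ZMod p × ZMod p, w.2.1 * v.1 + w.2.2 = v.2.1 * w.1 + v.2.2 → Meet (φ v) (ψ w) := by
    intro v w h
    refine meet_of_rel (hne v w) ?_
    show ι v.2.2 - (ι w.2.2 - τ * ι w.2.1) = ι w.2.1 * (ι v.1 + τ) - τ * ι v.2.1 * (ι w.1 / τ)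
    have h1 : τ * ι v.2.1 * (ι w.1 / τ) = ι v.2.1 * ι w.1 := by field_simp
    have h2 := congrArg ι h
    simp only [map_add, map_mul] at h2
    rw [h1]
    linear_combination -h2
  set 𝒜 := (S ×ˢ L).image φ with h𝒜
  set ℬ := (S ×ˢ L).image ψ with hℬ
  have c𝒜 : 𝒜.card = N := by rw [h𝒜, Finset.card_image_of_injOn injφ, Finset.card_product]
  have cℬ : ℬ.card = N := by rw [hℬ, Finset.card_image_of_injOn injψ, Finset.card_product]
  have o1 : OneSide k 𝒜 ℬ := by
    refine ⟨?_, ?_, ?_⟩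
    · intro r hr r' hr' h
      obtain ⟨v, hv, rfl⟩ := Finset.mem_image.mp hr
      obtain ⟨w, hw, rfl⟩ := Finset.mem_image.mp hr'
      rw [skφ v hv w hw h]
    · intro r hr r' hr'
      obtain ⟨v, hv, rfl⟩ := Finset.mem_image.mp hr
      obtain ⟨w, hw, rfl⟩ := Finset.mem_image.mp hr'
      exact hne v w
    · intro q _ κ c
      refine kcond 𝒜 q (S.image fun x => ι x + τ) ((L.image Prod.fst).image fun m => τ * ι m) k ?_ ?_
        (Finset.card_image_le.trans hSk) (Finset.card_image_le.trans hLk) κ c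
      · intro r hr
        obtain ⟨v, hv, rfl⟩ := Finset.mem_image.mp hr
        exact Finset.mem_image_of_mem _ (Finset.mem_product.mp hv).1
      · intro r hr
        obtain ⟨v, hv, rfl⟩ := Finset.mem_image.mp hr
        exact Finset.mem_image_of_mem _ (Finset.mem_image_of_mem _ (Finset.mem_product.mp hv).2)
  have o2 : OneSide k ℬ 𝒜 := by
    refine ⟨?_, ?_, ?_⟩
    · intro r hr r' hr' h
      obtain ⟨v, hv, rfl⟩ := Finset.mem_image.mp hr
      obtain ⟨w, hw, rfl⟩ := Finset.mem_image.mp hr'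
      rw [skψ v hv w hw h]
    · intro r hr r' hr'
      obtain ⟨v, hv, rfl⟩ := Finset.mem_image.mp hr
      obtain ⟨w, hw, rfl⟩ := Finset.mem_image.mp hr'
      exact (hne w v).symm
    · intro q _ κ c
      refine kcond ℬ q (S.image fun x => ι x / τ) ((L.image Prod.fst).image fun m => ι m) k ?_ ?_
        (Finset.card_image_le.trans hSk) (Finset.card_image_le.trans hLk) κ c
      · intro r hr
        obtain ⟨v, hv, rfl⟩ := Finset.mem_image.mp hr
        exact Finset.mem_image_of_mem _ (Finset.mem_product.mp hv).1
      · intro r hr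
        obtain ⟨v, hv, rfl⟩ := Finset.mem_image.mp hr
        exact Finset.mem_image_of_mem _ (Finset.mem_image_of_mem _ (Finset.mem_product.mp hv).2)
  have main := incid p (Fact.out : p.Prime).two_le k N hN (2 * N) 𝒜 ℬ (by omega) o1 o2 c𝒜.le cℬ.le
  refine le_trans ?_ main
  rw [← Finset.card_sigma]
  refine Finset.card_le_card_of_injOn (fun z => ⟨ψ z.1, φ z.2⟩) ?_ ?_
  · intro z hz
    obtain ⟨h1, h2⟩ := Finset.mem_filter.mp hz
    obtain ⟨h3, h4⟩ := Finset.mem_product.mp h1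
    refine Finset.mem_sigma.mpr ⟨Finset.mem_image_of_mem _ h3, Finset.mem_filter.mpr ⟨Finset.mem_image_of_mem _ h4, hcross _ _ h2⟩⟩
  · intro z hz z' hz' he
    obtain ⟨h3, h4⟩ := Finset.mem_product.mp (Finset.mem_filter.mp hz).1
    obtain ⟨h3', h4'⟩ := Finset.mem_product.mp (Finset.mem_filter.mp hz').1
    have he' := Sigma.mk.inj_iff.mp he
    exact Prod.ext (injψ h3 h3' he'.1) (injφ h4 h4' (eq_of_heq he'.2))

end energy
section app

lemma fiber_le_mu {p : ℕ} [NeZero p] (g : ZMod p → ZMod p) (t : ZMod p) (ht : t ≠ 0) :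
    (Finset.univ.filter fun x : ZMod p => x ≠ 0 ∧ g x = t).card ≤ mu g := by
  unfold mu
  exact Finset.le_sup (f := fun t => (Finset.univ.filter fun x : ZMod p => x ≠ 0 ∧ g x = t).card)
    (Finset.mem_filter.mpr ⟨Finset.mem_univ _, ht⟩)

lemma comb (p : ℕ) [Fact p.Prime] (g h : ZMod p → ZMod p) (hg : ∀ x : ZMod p, x ≠ 0 → g x ≠ 0)
    (A B Cs : Finset (ZMod p)) (hA0 : (0 : ZMod p) ∉ A)
    (hp2 : (B + Cs).card * (A.card * Cs.card) ≤ p ^ 2) :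
    ∃ r : ℕ, r * r ≤ (B + Cs).card * (A.card * Cs.card) ∧
    (A.card * B.card * Cs.card) ^ 2 ≤ mu g ^ 2 *
      ((Finset.image₂ (fun x y => g x * (h x + y)) A B).card *
       (20000 * (r + ((B + Cs).card + A.card) + 1) * ((B + Cs).card * (A.card * Cs.card)))) := by
  classical
  set S := B + Cs with hS
  set Y := Finset.image₂ (fun x y => g x * (h x + y)) A B with hY
  set L : Finset (ZMod p × ZMod p) := (A ×ˢ Cs).image (fun z => (g z.1, g z.1 * (h z.1 - z.2))) with hL
  have hAne : ∀ a ∈ A, a ≠ 0 := fun a ha h0 => hA0 (h0 ▸ ha)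
  have cL : L.card ≤ A.card * Cs.card := by
    rw [hL, ← Finset.card_product]; exact Finset.card_image_le
  have cSL : S.card * L.card ≤ S.card * (A.card * Cs.card) := Nat.mul_le_mul_left _ cL
  have cSl : (L.image Prod.fst).card ≤ A.card := by
    refine le_trans (Finset.card_le_card (t := A.image g) ?_) Finset.card_image_le
    intro t ht
    obtain ⟨l, hl, rfl⟩ := Finset.mem_image.mp ht
    obtain ⟨z, hz, rfl⟩ := Finset.mem_image.mp hl
    exact Finset.mem_image_of_mem _ (Finset.mem_product.mp hz).1
  have hL0 : ∀ l ∈ L, l.1 ≠ 0 := by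
    intro l hl
    obtain ⟨z, hz, rfl⟩ := Finset.mem_image.mp hl
    exact hg _ (hAne _ (Finset.mem_product.mp hz).1)
  have hE := energy p S L hL0 (S.card + A.card) (by omega) (by omega) (cSL.trans hp2)
  set r := Nat.sqrt (S.card * L.card) with hr
  refine ⟨r, (Nat.sqrt_le _).trans cSL, ?_⟩
  set I := (S ×ˢ L).filter (fun z => z.2.1 * z.1 + z.2.2 ∈ Y) with hI
  set E := ((S ×ˢ L) ×ˢ (S ×ˢ L)).filter (fun z => z.1.2.1 * z.2.1 + z.1.2.2 = z.2.2.1 * z.1.1 + z.2.2.2) with hEd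
  have step1 : A.card * B.card * Cs.card ≤ mu g * I.card := by
    rw [← Finset.card_product, ← Finset.card_product]
    refine Finset.card_le_mul_card_image_of_maps_to
      (f := fun z : (ZMod p × ZMod p) × ZMod p => (z.1.2 + z.2, (g z.1.1, g z.1.1 * (h z.1.1 - z.2)))) ?_ _ ?_
    · intro z hz
      obtain ⟨h1, hc⟩ := Finset.mem_product.mp hz
      obtain ⟨ha, hb⟩ := Finset.mem_product.mp h1
      refine Finset.mem_filter.mpr ⟨Finset.mem_product.mpr ⟨Finset.add_mem_add hb hc, Finset.mem_image.mpr ⟨(z.1.1, z.2), Finset.mem_product.mpr ⟨ha, hc⟩, rfl⟩⟩, ?_⟩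
      have : g z.1.1 * (z.1.2 + z.2) + g z.1.1 * (h z.1.1 - z.2) = g z.1.1 * (h z.1.1 + z.1.2) := by ring
      show g z.1.1 * (z.1.2 + z.2) + g z.1.1 * (h z.1.1 - z.2) ∈ Y
      rw [this]
      exact Finset.mem_image₂_of_mem ha hb
    · intro w hw
      have hw0 : w.2.1 ≠ 0 := hL0 _ (Finset.mem_product.mp (Finset.mem_filter.mp hw).1).2
      refine le_trans (Finset.card_le_card_of_injOn (fun z => z.1.1) ?_ ?_) (fiber_le_mu g w.2.1 hw0)
      · intro z hz
        obtain ⟨h1, h2⟩ := Finset.mem_filter.mp hz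
        obtain ⟨h3, hc⟩ := Finset.mem_product.mp h1
        obtain ⟨ha, hb⟩ := Finset.mem_product.mp h3
        refine Finset.mem_coe.mpr (Finset.mem_filter.mpr ⟨Finset.mem_univ _, hAne _ ha, ?_⟩)
        rw [← h2]
      · intro z hz z' hz' he
        obtain ⟨h1, h2⟩ := Finset.mem_filter.mp hz
        obtain ⟨h1', h2'⟩ := Finset.mem_filter.mp hz'
        have ha := (Finset.mem_product.mp (Finset.mem_product.mp h1).1).1
        have hg0 := hg _ (hAne _ ha)
        simp only at he
        have e := h2.trans h2'.symm
        simp only [Prod.mk.injEq] at e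
        obtain ⟨e1, e2, e3⟩ := e
        rw [← he] at e3
        have e4 := mul_left_cancel₀ hg0 e3
        have e5 : z.2 = z'.2 := by linear_combination -e4
        have e6 : z.1.2 = z'.1.2 := by linear_combination e1 - e5
        exact Prod.ext (Prod.ext he e6) e5
  have step2 : I.card ^ 2 ≤ Y.card * E.card := by
    have h1 : I.card = ∑ y ∈ Y, (I.filter fun z => z.2.1 * z.1 + z.2.2 = y).card :=
      Finset.card_eq_sum_card_fiberwise (fun z hz => (Finset.mem_filter.mp hz).2)
    have h2 : (∑ y ∈ Y, (I.filter fun z => z.2.1 * z.1 + z.2.2 = y).card) ^ 2 ≤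
        Y.card * ∑ y ∈ Y, (I.filter fun z => z.2.1 * z.1 + z.2.2 = y).card ^ 2 := sq_sum_le_card_mul_sum_sq
    rw [h1]
    refine h2.trans (Nat.mul_le_mul_left _ ?_)
    simp only [sq, ← Finset.card_product]
    rw [← Finset.card_sigma]
    refine Finset.card_le_card_of_injOn (fun z => ((z.2.2.1, z.2.1.2), (z.2.1.1, z.2.2.2))) ?_ ?_
    · rintro ⟨y, ⟨s, l⟩, ⟨s', l'⟩⟩ hz
      obtain ⟨_, h3⟩ := Finset.mem_sigma.mp hz
      obtain ⟨h4, h5⟩ := Finset.mem_product.mp h3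
      obtain ⟨h6, h7⟩ := Finset.mem_filter.mp h4
      obtain ⟨h8, h9⟩ := Finset.mem_filter.mp h5
      obtain ⟨a1, a2⟩ := Finset.mem_product.mp (Finset.mem_filter.mp h6).1
      obtain ⟨b1, b2⟩ := Finset.mem_product.mp (Finset.mem_filter.mp h8).1
      exact Finset.mem_filter.mpr ⟨Finset.mem_product.mpr ⟨Finset.mem_product.mpr ⟨b1, a2⟩, Finset.mem_product.mpr ⟨a1, b2⟩⟩,
        h7.trans h9.symm⟩
    · rintro ⟨y, ⟨s, l⟩, ⟨s', l'⟩⟩ hz ⟨y1, ⟨s1, l1⟩, ⟨s1', l1'⟩⟩ hz1 he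
      have g1 := (Finset.mem_filter.mp (Finset.mem_product.mp (Finset.mem_sigma.mp hz).2).1).2
      have g2 := (Finset.mem_filter.mp (Finset.mem_product.mp (Finset.mem_sigma.mp hz1).2).1).2
      simp only [Prod.mk.injEq] at he
      obtain ⟨⟨e1, e2⟩, e3, e4⟩ := he
      subst e1 e2 e3 e4
      simp only at g1 g2
      subst g1 g2
      rfl
  calc (A.card * B.card * Cs.card) ^ 2 ≤ (mu g * I.card) ^ 2 := Nat.pow_le_pow_left step1 2
    _ = mu g ^ 2 * I.card ^ 2 := by ring
    _ ≤ mu g ^ 2 * (Y.card * E.card) := Nat.mul_le_mul_left _ step2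
    _ ≤ _ := by
      refine Nat.mul_le_mul_left _ (Nat.mul_le_mul_left _ (hE.trans ?_))
      calc 10000 * (r + (S.card + A.card) + 1) * (2 * (S.card * L.card))
          = 20000 * (r + (S.card + A.card) + 1) * (S.card * L.card) := by ring
        _ ≤ _ := Nat.mul_le_mul_left _ cSL

lemma finish (a b c m M : ℝ) (ha : 1 ≤ a) (hb : 1 ≤ b) (hc : 1 ≤ c) (hm : 1 ≤ m) (hM : 1 ≤ M)
    (H : a * b ^ 4 * c ≤ 10 ^ 15 * m ^ 4 * M ^ 5 ∨ a * b ^ 2 * c ≤ 10 ^ 9 * m ^ 2 * M ^ 3 ∨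
      b ^ 2 * c ≤ 10 ^ 6 * m ^ 2 * M ^ 2) :
    (1/1000 : ℝ) * min (a ^ ((1:ℝ)/5) * b ^ ((4:ℝ)/5) * c ^ ((1:ℝ)/5) / m ^ ((4:ℝ)/5))
            (min (b * c ^ ((1:ℝ)/2) / m)
              (min (b * a ^ ((1:ℝ)/2) / m)
                (b ^ ((2:ℝ)/3) * c ^ ((1:ℝ)/3) * a ^ ((1:ℝ)/3) / m ^ ((2:ℝ)/3)))) ≤ M := by
  have ha0 : 0 ≤ a := by linarith
  have hb0 : 0 ≤ b := by linarith
  have hc0 : 0 ≤ c := by linarith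
  have hm0 : 0 < m := by linarith
  have hM0 : 0 ≤ M := by linarith
  have rp : ∀ (x : ℝ), 0 ≤ x → ∀ (e : ℝ) (n k : ℕ), e * n = k → (x ^ e) ^ n = x ^ k := by
    intro x hx e n k h
    rw [← Real.rpow_natCast, ← Real.rpow_mul hx, h, Real.rpow_natCast]
  rcases H with H | H | H
  · refine le_trans (mul_le_mul_of_nonneg_left (min_le_left _ _) (by norm_num)) ?_
    rw [← pow_le_pow_iff_left₀ (by positivity) hM0 (n := 5) (by norm_num)]
    rw [mul_pow, div_pow _ (m ^ _), mul_pow, mul_pow, rp a ha0 _ 5 1 (by norm_num), rp b hb0 _ 5 4 (by norm_num),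
      rp c hc0 _ 5 1 (by norm_num), rp m hm0.le _ 5 4 (by norm_num), ← mul_div_assoc, div_le_iff₀ (by positivity)]
    nlinarith
  · refine le_trans (mul_le_mul_of_nonneg_left ((min_le_right _ _).trans ((min_le_right _ _).trans (min_le_right _ _))) (by norm_num)) ?_
    rw [← pow_le_pow_iff_left₀ (by positivity) hM0 (n := 3) (by norm_num)]
    rw [mul_pow, div_pow _ (m ^ _), mul_pow, mul_pow, rp a ha0 _ 3 1 (by norm_num), rp b hb0 _ 3 2 (by norm_num),
      rp c hc0 _ 3 1 (by norm_num), rp m hm0.le _ 3 2 (by norm_num), ← mul_div_assoc, div_le_iff₀ (by positivity)]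
    nlinarith
  · refine le_trans (mul_le_mul_of_nonneg_left ((min_le_right _ _).trans (min_le_left _ _)) (by norm_num)) ?_
    rw [← pow_le_pow_iff_left₀ (by positivity) hM0 (n := 2) (by norm_num)]
    rw [mul_pow, div_pow _ m, mul_pow, rp c hc0 _ 2 1 (by norm_num), ← mul_div_assoc, div_le_iff₀ (by positivity)]
    nlinarith

lemma cases_real (a b c m M s y r : ℝ) (ha : 1 ≤ a) (hb : 1 ≤ b) (hc : 1 ≤ c) (hm : 1 ≤ m) (hM : 1 ≤ M)
    (hs : 0 ≤ s) (hy : 0 ≤ y) (hr : 0 ≤ r) (hsM : s ≤ M) (hyM : y ≤ M) (hrr : r * r ≤ s * (a * c))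
    (H : (a * b * c) ^ 2 ≤ m ^ 2 * (y * (20000 * (r + (s + a) + 1) * (s * (a * c))))) :
    a * b ^ 4 * c ≤ 10 ^ 15 * m ^ 4 * M ^ 5 ∨ a * b ^ 2 * c ≤ 10 ^ 9 * m ^ 2 * M ^ 3 ∨
      b ^ 2 * c ≤ 10 ^ 6 * m ^ 2 * M ^ 2 := by
  have hac : 0 < a * c := by positivity
  have H1 : a * b ^ 2 * c ≤ 20000 * m ^ 2 * M ^ 2 * (r + 2 * M + a) := by
    have h1 : y * (20000 * (r + (s + a) + 1) * (s * (a * c))) ≤ M * (20000 * (r + (M + a) + M) * (M * (a * c))) := by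
      gcongr
    have h2 := H.trans (mul_le_mul_of_nonneg_left h1 (by positivity))
    have h3 : (a * c) * (a * b ^ 2 * c) ≤ (a * c) * (20000 * m ^ 2 * M ^ 2 * (r + 2 * M + a)) := by
      calc (a * c) * (a * b ^ 2 * c) = (a * b * c) ^ 2 := by ring
        _ ≤ _ := h2
        _ = _ := by ring
    exact le_of_mul_le_mul_left h3 hac
  have hmM : 0 < m ^ 2 * M ^ 2 := by positivity
  by_cases c1 : r + 2 * M + a ≤ 3 * r
  · left
    have h1 : a * b ^ 2 * c ≤ 60000 * (m ^ 2 * M ^ 2) * r := by nlinarith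
    have h2 : (a * b ^ 2 * c) * (a * b ^ 2 * c) ≤ (60000 * (m ^ 2 * M ^ 2) * r) * (60000 * (m ^ 2 * M ^ 2) * r) :=
      mul_self_le_mul_self (by positivity) h1
    have h3 : (60000 * (m ^ 2 * M ^ 2) * r) * (60000 * (m ^ 2 * M ^ 2) * r) ≤ (60000 * (m ^ 2 * M ^ 2)) ^ 2 * (M * (a * c)) := by
      have : r * r ≤ M * (a * c) := hrr.trans (by gcongr)
      calc _ = (60000 * (m ^ 2 * M ^ 2)) ^ 2 * (r * r) := by ring
        _ ≤ _ := by gcongr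
    have h4 : (a * c) * (a * b ^ 4 * c) ≤ (a * c) * (60000 ^ 2 * m ^ 4 * M ^ 5) := by
      calc _ = (a * b ^ 2 * c) * (a * b ^ 2 * c) := by ring
        _ ≤ _ := h2.trans h3
        _ = _ := by ring
    refine (le_of_mul_le_mul_left h4 hac).trans ?_
    gcongr
    norm_num
  · by_cases c2 : r + 2 * M + a ≤ 6 * M
    · right; left
      have h1 : a * b ^ 2 * c ≤ 20000 * m ^ 2 * M ^ 2 * (6 * M) := H1.trans (by gcongr)
      refine h1.trans ?_
      have : 0 ≤ m ^ 2 * M ^ 3 := by positivity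
      nlinarith
    · right; right
      have c3 : r + 2 * M + a ≤ 3 * a := by linarith
      have h1 : a * b ^ 2 * c ≤ 20000 * m ^ 2 * M ^ 2 * (3 * a) := H1.trans (by gcongr)
      have h2 : a * (b ^ 2 * c) ≤ a * (60000 * (m ^ 2 * M ^ 2)) := by
        calc _ = a * b ^ 2 * c := by ring
          _ ≤ _ := h1
          _ = _ := by ring
      have h3 := le_of_mul_le_mul_left h2 (by linarith)
      nlinarith

lemma big_case (a b c m M s P : ℝ) (p : ℝ) (hp : 0 < p) (hP : 0 ≤ P) (hPp : P ^ 8 = p ^ 5)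
    (ha : 1 ≤ a) (hb : 1 ≤ b) (hc : 1 ≤ c) (hm : 1 ≤ m)
    (haP : a ≤ P) (hbP : b ≤ P) (hcP : c ≤ P)
    (hs : 0 ≤ s) (hsM : s ≤ M) (H : p ^ 2 ≤ s * (a * c)) :
    a * b ^ 4 * c ≤ 10 ^ 15 * m ^ 4 * M ^ 5 := by
  have hac : 0 < a * c := by positivity
  have h1 : (a * c) ^ 5 * (a * b ^ 4 * c) ≤ (a * c) ^ 5 * s ^ 5 := by
    calc (a * c) ^ 5 * (a * b ^ 4 * c) = a ^ 6 * c ^ 6 * b ^ 4 := by ring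
      _ ≤ P ^ 6 * P ^ 6 * P ^ 4 := by gcongr
      _ = (P ^ 8) ^ 2 := by ring
      _ = (p ^ 2) ^ 5 := by rw [hPp]; ring
      _ ≤ (s * (a * c)) ^ 5 := by gcongr
      _ = _ := by ring
  have h2 := le_of_mul_le_mul_left h1 (by positivity)
  have h3 : s ^ 5 ≤ M ^ 5 := by gcongr
  have h4 : 1 ≤ m ^ 4 := one_le_pow₀ hm
  have h5 : 0 ≤ M ^ 5 := by have := hs.trans hsM; positivity
  nlinarith

end app

end PM
theorem pham_mojarrad_sum :
    ∃ C > (0:ℝ),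
      ∀ (p : ℕ) [Fact p.Prime], p ≠ 2 →
      ∀ g h : ZMod p → ZMod p,
      (∀ x : ZMod p, x ≠ 0 → g x ≠ 0) → (∀ x : ZMod p, x ≠ 0 → h x ≠ 0) →
      ∀ A B Cs : Finset (ZMod p),
      A.Nonempty → B.Nonempty → Cs.Nonempty →
      (0:ZMod p) ∉ A → (0:ZMod p) ∉ B → (0:ZMod p) ∉ Cs →
      (A.card : ℝ) ≤ (p:ℝ) ^ ((5:ℝ)/8) →
      (B.card : ℝ) ≤ (p:ℝ) ^ ((5:ℝ)/8) →
      (Cs.card : ℝ) ≤ (p:ℝ) ^ ((5:ℝ)/8) →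
      C * min ((A.card:ℝ) ^ ((1:ℝ)/5) * (B.card:ℝ) ^ ((4:ℝ)/5) * (Cs.card:ℝ) ^ ((1:ℝ)/5) /
                ((mu g : ℕ) : ℝ) ^ ((4:ℝ)/5))
            (min ((B.card:ℝ) * (Cs.card:ℝ) ^ ((1:ℝ)/2) / ((mu g : ℕ) : ℝ))
              (min ((B.card:ℝ) * (A.card:ℝ) ^ ((1:ℝ)/2) / ((mu g : ℕ) : ℝ))
                ((B.card:ℝ) ^ ((2:ℝ)/3) * (Cs.card:ℝ) ^ ((1:ℝ)/3) * (A.card:ℝ) ^ ((1:ℝ)/3) /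
                  ((mu g : ℕ) : ℝ) ^ ((2:ℝ)/3)))) ≤
        max ((Finset.image₂ (fun x y => g x * (h x + y)) A B).card : ℝ) (((B + Cs).card : ℝ)) := by
  refine ⟨1/1000, by norm_num, ?_⟩
  intro p _ _ g h hg _ A B Cs hA hB hC hA0 _ _ hAp hBp hCp
  have ca : (1:ℝ) ≤ A.card := by exact_mod_cast hA.card_pos
  have cb : (1:ℝ) ≤ B.card := by exact_mod_cast hB.card_pos
  have cc : (1:ℝ) ≤ Cs.card := by exact_mod_cast hC.card_pos
  have cs : (1:ℝ) ≤ (B + Cs).card := by exact_mod_cast (hB.add hC).card_pos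
  have hmu : (1:ℝ) ≤ (mu g : ℕ) := by
    obtain ⟨x, hx⟩ := hA
    have hx0 : x ≠ 0 := fun h0 => hA0 (h0 ▸ hx)
    have h1 := PM.fiber_le_mu g (g x) (hg x hx0)
    have h2 : 0 < (Finset.univ.filter fun z : ZMod p => z ≠ 0 ∧ g z = g x).card :=
      Finset.card_pos.mpr ⟨x, Finset.mem_filter.mpr ⟨Finset.mem_univ _, hx0, rfl⟩⟩
    exact_mod_cast h2.trans_le h1
  set M : ℝ := max ((Finset.image₂ (fun x y => g x * (h x + y)) A B).card : ℝ) (((B + Cs).card : ℝ)) with hM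
  have hsM : ((B + Cs).card : ℝ) ≤ M := le_max_right _ _
  have hyM : ((Finset.image₂ (fun x y => g x * (h x + y)) A B).card : ℝ) ≤ M := le_max_left _ _
  have hM1 : 1 ≤ M := cs.trans hsM
  apply PM.finish _ _ _ _ _ ca cb cc hmu hM1
  by_cases hp2 : (B + Cs).card * (A.card * Cs.card) ≤ p ^ 2
  · obtain ⟨r, hr, hmain⟩ := PM.comb p g h hg A B Cs hA0 hp2
    refine PM.cases_real _ _ _ _ M ((B + Cs).card : ℝ)
      ((Finset.image₂ (fun x y => g x * (h x + y)) A B).card : ℝ) (r : ℝ) ca cb cc hmu hM1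
      (by positivity) (by positivity) (by positivity) hsM hyM ?_ ?_
    · exact_mod_cast hr
    · exact_mod_cast hmain
  · left
    push Not at hp2
    have hp0 : (0:ℝ) < p := by exact_mod_cast (Fact.out : p.Prime).pos
    refine PM.big_case _ _ _ _ M ((B + Cs).card : ℝ) ((p:ℝ) ^ ((5:ℝ)/8)) p hp0 (by positivity) ?_ ca cb cc hmu
      hAp hBp hCp (by positivity) hsM ?_
    · rw [← Real.rpow_natCast, ← Real.rpow_mul hp0.le, ← Real.rpow_natCast]
      norm_num
    · exact_mod_cast hp2.le
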